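/- Let f be an orientation-preserving homeomorphism of ℝ² satisfying (P1) and (P2), with Fix(f) not compact, and let I be an adapted isotopy. Then for every z' ∈ Fix(f): (a) the function z ↦ ρ_{z'}(z) is bounded on Fix(f) ∖ {z'}; and (b) for every free disc U for f, the function z ↦ ρ_{z'}(z) is bounded on the set of points of Rec⁺(f) ∩ U where it is defined. Consequently ρ_{z'} is locally bounded on Rec⁺(f) ∖ Fix(f). -/

import Mathlib

open MeasureTheory Filter Topology Set Metric

noncomputable section

attribute [local instance] Classical.propDecidable

/-- An isotopy (within homeomorphisms of `X`) from the identity to `f`,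
parametrised by `t ∈ [0,1]` (the values for `t ∉ [0,1]` are irrelevant). -/
structure HIsotopy {X : Type*} [TopologicalSpace X] (f : X ≃ₜ X) where
  F : ℝ → X ≃ₜ X
  cont : Continuous fun p : ℝ × X => F p.1 p.2
  cont_symm : Continuous fun p : ℝ × X => (F p.1).symm p.2
  zero : F 0 = Homeomorph.refl X
  one : F 1 = f

/-- The set of fixed points of a map. -/
def FixPts {X : Type*} (g : X → X) : Set X := {z | g z = z}

/-- The set of positively recurrent points of `f`. -/
def RecPlus (f : ℂ ≃ₜ ℂ) : Set ℂ :=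
  {z | ∃ n : ℕ → ℕ, StrictMono n ∧ Tendsto (fun k => (⇑f)^[n k] z) atTop (𝓝 z)}

/-- The total angular variation (number of turns around the origin, i.e. the
integral of the polar-angle form `dθ`) of a continuous path `[0,1] → ℂ ∖ {0}`,
defined via a continuous lift of the argument (junk value otherwise). -/
def angVar (γ : ℝ → ℂ) : ℝ :=
  if h : ∃ θ : ℝ → ℝ, ContinuousOn θ (Set.Icc 0 1) ∧
      ∀ t ∈ Set.Icc (0 : ℝ) 1, γ t = (‖γ t‖ : ℂ) * Complex.exp ((θ t : ℂ) * Complex.I)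
  then (h.choose 1 - h.choose 0) / (2 * Real.pi)
  else 0

/-- `Enlace_I(z,z')`: the integral of `dθ` along `t ↦ f_t(z) - f_t(z')`. -/
def Enlace {f : ℂ ≃ₜ ℂ} (I : HIsotopy f) (z z' : ℂ) : ℝ :=
  angVar fun t => I.F t z - I.F t z'

/-- `Tourne_I(z)`: the integral of `dθ` along `t ↦ f_t(z)`. -/
def Tourne {f : ℂ ≃ₜ ℂ} (I : HIsotopy f) (z : ℂ) : ℝ :=
  angVar fun t => I.F t z

/-- Property (P1): `Enlace_I` is bounded on pairs of distinct fixed points. -/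
def P1 {f : ℂ ≃ₜ ℂ} (I : HIsotopy f) : Prop :=
  ∃ M : ℝ, ∀ z ∈ FixPts ⇑f, ∀ z' ∈ FixPts ⇑f, z ≠ z' → |Enlace I z z'| ≤ M

/-- Property (P2): `Tourne_I` is constant on the fixed points in a
neighbourhood of infinity (i.e. outside some compact set). -/
def P2 {f : ℂ ≃ₜ ℂ} (I : HIsotopy f) : Prop :=
  ∃ K : Set ℂ, IsCompact K ∧
    ∀ z ∈ FixPts ⇑f \ K, ∀ z' ∈ FixPts ⇑f \ K, Tourne I z = Tourne I z'

/-- An isotopy is adapted if `Tourne_I` vanishes on the fixed points in a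
neighbourhood of infinity. -/
def Adapted {f : ℂ ≃ₜ ℂ} (I : HIsotopy f) : Prop :=
  ∃ K : Set ℂ, IsCompact K ∧ ∀ z ∈ FixPts ⇑f \ K, Tourne I z = 0

/-- The orbit of `z` has rotation number `ρ` around `z'` (with respect to the
isotopy `I`): along every strictly increasing sequence of integers `(n k)` with
`f^[n k] z → z`, the Birkhoff averages of `Enlace I · z'` converge to `ρ`. -/
def HasRot {f : ℂ ≃ₜ ℂ} (I : HIsotopy f) (z' z : ℂ) (ρ : ℝ) : Prop :=
  ∀ n : ℕ → ℕ, StrictMono n → Tendsto (fun k => (⇑f)^[n k] z) atTop (𝓝 z) →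
    Tendsto (fun k => (∑ r ∈ Finset.range (n k), Enlace I ((⇑f)^[r] z) z') / (n k : ℝ))
      atTop (𝓝 ρ)

/-- The rotation number `ρ_{z'}(z)` as a function (junk value `0` if it is
not defined). -/
def rho {f : ℂ ≃ₜ ℂ} (I : HIsotopy f) (z' z : ℂ) : ℝ :=
  if h : ∃ ρ : ℝ, HasRot I z' z ρ then h.choose else 0

/-- A free disc for `f`: an open set homeomorphic to the plane and disjoint
from its image. -/
def FreeDisc (f : ℂ ≃ₜ ℂ) (U : Set ℂ) : Prop :=
  IsOpen U ∧ Nonempty (U ≃ₜ ℂ) ∧ Disjoint (⇑f '' U) U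

/-- The first return time `τ_U(z)` to `U` (junk value `0` if the orbit never
returns). -/
def retTime (f : ℂ ≃ₜ ℂ) (U : Set ℂ) (z : ℂ) : ℕ :=
  sInf {n : ℕ | 0 < n ∧ (⇑f)^[n] z ∈ U}

/-- `γ` is a path in `U` from `x` to `y` (parametrised by `[0,1]`). -/
def IsPathIn (U : Set ℂ) (x y : ℂ) (γ : ℝ → ℂ) : Prop :=
  ContinuousOn γ (Set.Icc 0 1) ∧ (∀ t ∈ Set.Icc (0 : ℝ) 1, γ t ∈ U) ∧ γ 0 = x ∧ γ 1 = y

/-- `α_{U,z'}(z) = Σ_{0 ≤ ℓ < τ_U(z)} Enlace_I(f^ℓ(z),z') + ∫_{γ_{U,z} - z'} dθ`,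
where `γ_{U,z}` is a path in `U` joining the first return `F_U(z)` to `z`. -/
def alphaU {f : ℂ ≃ₜ ℂ} (I : HIsotopy f) (U : Set ℂ) (z' z : ℂ) : ℝ :=
  (∑ ℓ ∈ Finset.range (retTime f U z), Enlace I ((⇑f)^[ℓ] z) z') +
    if h : ∃ γ : ℝ → ℂ, IsPathIn U ((⇑f)^[retTime f U z] z) z γ
    then angVar fun t => h.choose t - z' else 0

/-- `α̂_{U,R}(z) = sup { |α_{U,z'}(z)| : z' ∈ Fix(f), ‖z'‖ ≥ R }`. -/
def alphaHat {f : ℂ ≃ₜ ℂ} (I : HIsotopy f) (U : Set ℂ) (R : ℝ) (z : ℂ) : ℝ :=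
  sSup {a : ℝ | ∃ z' ∈ FixPts ⇑f, R ≤ ‖z'‖ ∧ a = |alphaU I U z' z|}

/-- The (closed) support of a measure. -/
def measSupport {X : Type*} [TopologicalSpace X] {m : MeasurableSpace X}
    (μ : Measure X) : Set X :=
  {x | ∀ U : Set X, IsOpen U → x ∈ U → μ U ≠ 0}

/-- The standard unit sphere `S² ⊂ ℝ³`. -/
notation "𝕊²" => Metric.sphere (0 : EuclideanSpace ℝ (Fin 3)) 1

instance : Fact (Module.finrank ℝ (EuclideanSpace ℝ (Fin 3)) = 3) :=
  ⟨finrank_euclideanSpace_fin⟩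

open Manifold in
/-- `g` is a `C¹` diffeomorphism of the standard sphere. -/
def IsC1SphereDiffeo (g : 𝕊² → 𝕊²) : Prop :=
  Function.Bijective g ∧ ContMDiff (𝓡 2) (𝓡 2) 1 g ∧
    ∃ g' : 𝕊² → 𝕊², Function.LeftInverse g' g ∧ Function.RightInverse g' g ∧
      ContMDiff (𝓡 2) (𝓡 2) 1 g'

/-- `f` extends to a `C¹` diffeomorphism of `S² = ℝ² ⊔ {∞}` for some smooth
structure on `S²`: transporting the extension of `f` to the one-point
compactification through some homeomorphism with the standard sphere yields a
`C¹` diffeomorphism. -/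
def ExtendsToC1SphereDiffeo (f : ℂ ≃ₜ ℂ) : Prop :=
  ∃ φ : OnePoint ℂ ≃ₜ 𝕊², IsC1SphereDiffeo fun x => φ (OnePoint.map (⇑f) (φ.symm x))

/-- The commutator loop `t ↦ [f₁^t, f₂^t] = f₁^t ∘ f₂^t ∘ (f₁^t)⁻¹ ∘ (f₂^t)⁻¹`. -/
def commLoop {X : Type*} [TopologicalSpace X] {f₁ f₂ : X ≃ₜ X}
    (I₁ : HIsotopy f₁) (I₂ : HIsotopy f₂) (t : ℝ) : X ≃ₜ X :=
  (I₂.F t).symm.trans ((I₁.F t).symm.trans ((I₂.F t).trans (I₁.F t)))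

/-- The invariant `W(f₁,f₂)` vanishes: for isotopies from the identity to
`f₁`, `f₂`, the commutator loop is null-homotopic (rel basepoint) in the group
of homeomorphisms. -/
def WVanishes {X : Type*} [TopologicalSpace X] (f₁ f₂ : X ≃ₜ X) : Prop :=
  ∃ (I₁ : HIsotopy f₁) (I₂ : HIsotopy f₂) (H : ℝ → ℝ → X ≃ₜ X),
    Continuous (fun p : (ℝ × ℝ) × X => H p.1.1 p.1.2 p.2) ∧
    Continuous (fun p : (ℝ × ℝ) × X => (H p.1.1 p.1.2).symm p.2) ∧
    (∀ t, H 0 t = commLoop I₁ I₂ t) ∧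
    (∀ t, H 1 t = Homeomorph.refl X) ∧
    (∀ s, H s 0 = Homeomorph.refl X) ∧
    (∀ s, H s 1 = Homeomorph.refl X)

/-- The shorter great-circle arc joining `p` to `z` on the unit sphere
(for `z` neither `p` nor its antipode): the points of the sphere which are
nonnegative linear combinations of `p` and `z`. -/
def minorArcS (p z : 𝕊²) : Set 𝕊² :=
  {x | ∃ a b : ℝ, 0 ≤ a ∧ 0 ≤ b ∧
    (x : EuclideanSpace ℝ (Fin 3)) =
      a • (p : EuclideanSpace ℝ (Fin 3)) + b • (z : EuclideanSpace ℝ (Fin 3))}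

/-- The longer great-circle arc joining `p` to `z` on the unit sphere. -/
def majorArcS (p z : 𝕊²) : Set 𝕊² :=
  {x | ∃ a b : ℝ, (a ≤ 0 ∨ b ≤ 0) ∧
    (x : EuclideanSpace ℝ (Fin 3)) =
      a • (p : EuclideanSpace ℝ (Fin 3)) + b • (z : EuclideanSpace ℝ (Fin 3))}

/-!
The isotopy, seen from the moving point `f_t(z')`, lifts through `w ↦ z' + exp w` to an isotopy of
the plane that commutes with the translation by `c = 2πi`. Its end point `h` lifts `f`, and the
imaginary part of `h w - w` is `2π` times the linking number of `z' + exp w` with `z'`.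

Suppose that two recurrent points of a free disc `U` have rotation numbers on either side of an
integer `k`. A lift `D` of `U` is free for `g = h - k c`, and recurrence makes `D` visit under `g`
both a translate `D + p c` with `p > 0` and a translate `D + q c` with `q < 0`. By Franks' lemma `g`
has a fixed point, whose image in the plane is a fixed point of `f` with linking number `k`. So no
rotation number on `U` is separated from another one by an integer larger than the linking numbers
of the fixed points.

Franks' lemma rests on Brouwer's: an orientation-preserving embedding `g` with a periodic point has
a fixed point. Otherwise a translation arc through the periodic point and its images would close up,
and comparing continuous logarithms of `g z - z` and of the chords along the resulting closed curve
leads to a contradiction. Orientation enters as a symmetric logarithm of the difference quotient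
`(g x - g y) / (x - y)`.
-/

/-! ### Continuous logarithms -/

lemma eq_of_exp_eq_const {A : Type*} [TopologicalSpace A] {S : Set A} (hS : IsPreconnected S)
    {F : A → ℂ} (hF : ContinuousOn F S) {c : ℂ} (hc : ∀ x ∈ S, Complex.exp (F x) = c)
    {x y : A} (hx : x ∈ S) (hy : y ∈ S) : F x = F y :=
  Complex.isCoveringMap_exp.constOn_of_comp hS hF
    (fun a ha b hb => Subtype.ext ((hc a ha).trans (hc b hb).symm)) hx hy

lemma sub_eq_sub_of_exp_eq {A : Type*} [TopologicalSpace A] {S : Set A} (hS : IsPreconnected S)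
    {F G : A → ℂ} (hF : ContinuousOn F S) (hG : ContinuousOn G S)
    (hFG : ∀ x ∈ S, Complex.exp (F x) = Complex.exp (G x)) {x y : A} (hx : x ∈ S) (hy : y ∈ S) :
    F x - G x = F y - G y :=
  eq_of_exp_eq_const (F := fun a => F a - G a) (c := 1) hS (hF.sub hG)
    (fun a ha => by rw [Complex.exp_sub, hFG a ha, div_self (Complex.exp_ne_zero _)]) hx hy

lemma isLocalHomeomorph_exp : IsLocalHomeomorph Complex.exp := by
  rw [isLocalHomeomorph_iff_isLocalHomeomorphOn_univ]
  exact Complex.isCoveringMapOn_exp.isLocalHomeomorphOn.mono fun z _ => Complex.exp_ne_zero z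

lemma exists_log_of_homotopy_one {A : Type*} [TopologicalSpace A] (V : C(unitInterval × A, ℂ))
    (hV : ∀ p, V p ≠ 0) (hV0 : ∀ a, V (0, a) = 1) :
    ∃ Θ : C(unitInterval × A, ℂ), (∀ p, Complex.exp (Θ p) = V p) ∧ ∀ a, Θ (0, a) = 0 := by
  let H : C(unitInterval × A, {z : ℂ // z ≠ 0}) :=
    ⟨fun p => ⟨V p, hV p⟩, V.continuous.subtype_mk _⟩
  have hH0 : ∀ a, H (0, a) = ⟨Complex.exp (ContinuousMap.const A (0 : ℂ) a),
      Complex.exp_ne_zero _⟩ := fun a => Subtype.ext (by simp [H, hV0])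
  refine ⟨Complex.isCoveringMap_exp.liftHomotopy H (.const A 0) hH0, fun p => ?_,
    fun a => Complex.isCoveringMap_exp.liftHomotopy_zero H (.const A 0) hH0 a⟩
  exact congrArg Subtype.val
    (congrFun (Complex.isCoveringMap_exp.liftHomotopy_lifts H (.const A 0) hH0) p)

lemma exists_continuousOn_log_of_starConvex {E : Type*} [AddCommGroup E] [Module ℝ E]
    [TopologicalSpace E] [ContinuousAdd E] [ContinuousSMul ℝ E] {S : Set E} {c : E} (hc : c ∈ S)
    (hS : StarConvex ℝ c S) {v : E → ℂ} (hv : ContinuousOn v S) (hne : ∀ x ∈ S, v x ≠ 0) :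
    ∃ Θ : E → ℂ, ContinuousOn Θ S ∧ ∀ x ∈ S, Complex.exp (Θ x) = v x := by
  have mem_S (p : unitInterval × S) : (1 - (p.1 : ℝ)) • c + (p.1 : ℝ) • (p.2 : E) ∈ S :=
    hS p.2.2 (by linarith [p.1.2.2]) p.1.2.1 (by ring)
  obtain ⟨Θ, hΘ, -⟩ := exists_log_of_homotopy_one
    ⟨fun p : unitInterval × S => v ((1 - (p.1 : ℝ)) • c + (p.1 : ℝ) • (p.2 : E)) / v c,
      (hv.comp_continuous (by fun_prop) mem_S).div_const _⟩
    (fun p => div_ne_zero (hne _ (mem_S p)) (hne _ hc)) (fun a => by simp [hne c hc])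
  refine ⟨fun x => if hx : x ∈ S then Θ (1, ⟨x, hx⟩) + Complex.log (v c) else 0, ?_, fun x hx => ?_⟩
  · rw [continuousOn_iff_continuous_domRestrict]
    have : Continuous fun x : S => Θ (1, x) + Complex.log (v c) := by fun_prop
    exact this.congr fun x => by simp [Set.domRestrict]
  · simp [hx, Complex.exp_add, hΘ, Complex.exp_log (hne c hc), hne c hc]

/-! ### Orientation-preserving embeddings of the plane -/

/-- `E` is a symmetric continuous logarithm of the difference quotient of `g`, defined on pairs of
distinct points. -/
structure IsSymmLog (g : ℂ → ℂ) (E : ℂ × ℂ → ℂ) : Prop where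
  continuousOn : ContinuousOn E (diagonal ℂ)ᶜ
  symm : ∀ x y, x ≠ y → E (x, y) = E (y, x)
  exp_mul_sub : ∀ x y, x ≠ y → Complex.exp (E (x, y)) * (x - y) = g x - g y

/-- Orientation-preserving open embeddings `ℂ → ℂ`. Preservation of orientation is encoded by a
symmetric logarithm of the difference quotient: following it while two points trade places by a
half turn shows that `g` does not reverse the direction of that turn. -/
structure IsPositiveEmbedding (g : ℂ → ℂ) : Prop where
  isOpenEmbedding : IsOpenEmbedding g
  exists_isSymmLog : ∃ E, IsSymmLog g E

namespace IsPositiveEmbedding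

variable {g h : ℂ → ℂ}

lemma continuous (hg : IsPositiveEmbedding g) : Continuous g := hg.isOpenEmbedding.continuous

lemma injective (hg : IsPositiveEmbedding g) : Function.Injective g := hg.isOpenEmbedding.injective

protected lemma id : IsPositiveEmbedding id where
  isOpenEmbedding := .id
  exists_isSymmLog := ⟨0, continuousOn_const, fun _ _ _ => rfl, fun _ _ _ => by simp⟩

lemma add_const (c : ℂ) : IsPositiveEmbedding (· + c) where
  isOpenEmbedding := (Homeomorph.addRight c).isOpenEmbedding
  exists_isSymmLog := ⟨0, continuousOn_const, fun _ _ _ => rfl, fun _ _ _ => by simp⟩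

lemma comp (hg : IsPositiveEmbedding g) (hh : IsPositiveEmbedding h) :
    IsPositiveEmbedding (g ∘ h) where
  isOpenEmbedding := hg.isOpenEmbedding.comp hh.isOpenEmbedding
  exists_isSymmLog := by
    obtain ⟨E, hE⟩ := hg.exists_isSymmLog
    obtain ⟨D, hD⟩ := hh.exists_isSymmLog
    have hh_cont := hh.continuous
    refine ⟨fun p => E (h p.1, h p.2) + D p, ?_, fun x y hxy => ?_, fun x y hxy => ?_⟩
    · exact (hE.continuousOn.comp (f := fun p : ℂ × ℂ => (h p.1, h p.2)) (by fun_prop)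
        fun _ => mt fun hp => hh.injective hp).add hD.continuousOn
    · simp only [hE.symm _ _ (hh.injective.ne hxy), hD.symm _ _ hxy]
    · rw [Complex.exp_add, mul_assoc, hD.exp_mul_sub _ _ hxy,
        hE.exp_mul_sub _ _ (hh.injective.ne hxy)]
      rfl

end IsPositiveEmbedding

lemma exists_isSymmLog_of_isotopy (G : C(unitInterval × ℂ, ℂ)) (hG0 : ∀ z, G (0, z) = z)
    (hG : ∀ t, Function.Injective fun z => G (t, z)) : ∃ E, IsSymmLog (fun z => G (1, z)) E := by
  let A := ((diagonal ℂ)ᶜ : Set (ℂ × ℂ))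
  have sub_ne (a : A) : a.1.1 - a.1.2 ≠ 0 := sub_ne_zero.2 a.2
  obtain ⟨Θ, hΘ, hΘ0⟩ := exists_log_of_homotopy_one
    ⟨fun q : unitInterval × A => (G (q.1, q.2.1.1) - G (q.1, q.2.1.2)) / (q.2.1.1 - q.2.1.2),
      .div (by fun_prop) (by fun_prop) fun q => sub_ne q.2⟩
    (fun q => div_ne_zero (sub_ne_zero.2 ((hG q.1).ne q.2.2)) (sub_ne q.2))
    (fun a => by simpa [hG0] using div_self (sub_ne a))
  have hΘ_symm (a : A) (b : A) (hab : a.1 = b.1.swap) : Θ (1, a) = Θ (1, b) := by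
    have := sub_eq_sub_of_exp_eq (S := univ) (F := fun t => Θ (t, a)) (G := fun t => Θ (t, b))
      isPreconnected_univ (by fun_prop) (by fun_prop)
      (fun t _ => by
        simp only [hΘ, ContinuousMap.coe_mk, hab, Prod.fst_swap, Prod.snd_swap]
        rw [← neg_div_neg_eq, neg_sub, neg_sub])
      (mem_univ 1) (mem_univ 0)
    simpa [hΘ0, sub_eq_zero] using this
  refine ⟨fun p => if hp : p ∈ A then Θ (1, ⟨p, hp⟩) else 0, ?_, fun x y hxy => ?_,
    fun x y hxy => ?_⟩
  · rw [continuousOn_iff_continuous_domRestrict]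
    have : Continuous fun p : ((diagonal ℂ)ᶜ : Set (ℂ × ℂ)) => Θ (1, ⟨p, p.2⟩) := by fun_prop
    exact this.congr fun p => by simp [A, Set.domRestrict]
  · simpa only [dif_pos (show (x, y) ∈ A from hxy), dif_pos (show (y, x) ∈ A from hxy.symm)]
      using hΘ_symm _ _ rfl
  · rw [dif_pos (show (x, y) ∈ A from hxy), hΘ]
    exact div_mul_cancel₀ _ (sub_ne_zero.2 hxy)

lemma IsPositiveEmbedding.of_isotopy (G : C(unitInterval × ℂ, ℂ)) (hG0 : ∀ z, G (0, z) = z)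
    (hG : ∀ t, Function.Injective fun z => G (t, z)) (hG1 : IsOpenMap fun z => G (1, z)) :
    IsPositiveEmbedding fun z => G (1, z) where
  isOpenEmbedding := .of_continuous_injective_isOpenMap (by fun_prop) (hG 1) hG1
  exists_isSymmLog := exists_isSymmLog_of_isotopy G hG0 hG

lemma IsPositiveEmbedding.of_norm_sub_id_le {φ : ℂ → ℂ} {c : NNReal} (hc : c < 1)
    (hφ : ∀ x y, ‖φ x - φ y - (x - y)‖ ≤ c * ‖x - y‖) : IsPositiveEmbedding φ := by
  have hφ' : ApproximatesLinearOn φ ((ContinuousLinearEquiv.refl ℝ ℂ : ℂ ≃L[ℝ] ℂ) : ℂ →L[ℝ] ℂ)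
      univ c := fun x _ y _ => hφ x y
  let e := hφ'.toHomeomorph φ <| .inr <| by
    rw [show ‖((ContinuousLinearEquiv.refl ℝ ℂ).symm : ℂ →L[ℝ] ℂ)‖₊ = 1 from
      NNReal.eq (ContinuousLinearMap.norm_id (𝕜 := ℝ) (E := ℂ))]
    simpa using hc
  have hφ_cont : Continuous φ := e.continuous
  let G : C(unitInterval × ℂ, ℂ) :=
    ⟨fun p => p.2 + (p.1 : ℝ) * (φ p.2 - p.2), by fun_prop⟩
  have hG1 : (fun z => G (1, z)) = φ := by ext z; simp [G]
  rw [← hG1]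
  refine .of_isotopy G (fun z => by simp [G]) (fun t x y hxy => ?_) (hG1 ▸ e.isOpenMap)
  by_contra hne
  have hsub : x - y = -((t : ℝ) * (φ x - φ y - (x - y))) := by
    simp only [G, ContinuousMap.coe_mk] at hxy
    linear_combination hxy
  have hpos : 0 < ‖x - y‖ := norm_pos_iff.2 (sub_ne_zero.2 hne)
  have hle : ‖x - y‖ ≤ c * ‖x - y‖ := calc
    ‖x - y‖ = t * ‖φ x - φ y - (x - y)‖ := by
      conv_lhs => rw [hsub, norm_neg, norm_mul, Complex.norm_real, Real.norm_of_nonneg t.2.1]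
    _ ≤ 1 * (c * ‖x - y‖) := by gcongr; exacts [t.2.2, hφ x y]
    _ = c * ‖x - y‖ := one_mul _
  nlinarith [show (c : ℝ) < 1 from hc]

/-! ### Closed curves made of a translation arc and its iterates -/

/-- The curve `L : [0, T] → ℂ` is conjugate to a translation by `g`, in the sense that
`g (L s) = L (s + 1)`, and has exactly one self-intersection: it closes up at its end point, which
it first visits at a time `w < 1`. -/
structure IsTranslationLasso (g : ℂ → ℂ) (L : ℝ → ℂ) (w T : ℝ) : Prop where
  continuousOn : ContinuousOn L (Icc 0 T)
  injOn : InjOn L (Ico 0 T)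
  nonneg : 0 ≤ w
  lt_one : w < 1
  two_le : 2 ≤ T
  apply_end : L T = L w
  map_apply : ∀ s ∈ Icc 0 (T - 1), g (L s) = L (s + 1)

/-- The pairs of times `s < t` at which a lasso visits two different points. -/
def chordDomain (w T : ℝ) : Set (ℝ × ℝ) :=
  {p | 0 ≤ p.1 ∧ p.1 < p.2 ∧ p.2 ≤ T ∧ ¬(p.1 = w ∧ p.2 = T)}

lemma starConvex_chordDomain {w T : ℝ} (hT : 1 < T) :
    StarConvex ℝ ((0 : ℝ), (1 : ℝ)) (chordDomain w T) := by
  rintro ⟨s, t⟩ ⟨hs, hst, htT, hne⟩ a b ha hb hab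
  rcases ha.eq_or_lt with rfl | ha'
  · obtain rfl : b = 1 := by linarith
    simpa using ⟨hs, hst, htT, hne⟩
  obtain rfl : b = 1 - a := by linarith
  simp only at hs hst htT
  have hlt : a + (1 - a) * t < T := by nlinarith
  refine ⟨?_, ?_, ?_, fun h => ?_⟩
  · simpa using mul_nonneg hb hs
  · simp only [Prod.smul_mk, Prod.mk_add_mk, smul_eq_mul]
    nlinarith
  · simpa using hlt.le
  · simpa using hlt.ne (by simpa using h.2)

namespace IsTranslationLasso

variable {g : ℂ → ℂ} {L : ℝ → ℂ} {w T : ℝ} {E : ℂ × ℂ → ℂ} {Ξ : ℂ → ℂ} {Θ : ℝ × ℝ → ℂ}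

lemma chord_ne_zero (hL : IsTranslationLasso g L w T) {s t : ℝ} (h : (s, t) ∈ chordDomain w T) :
    L t - L s ≠ 0 := by
  obtain ⟨hs, hst, htT, hne⟩ := h
  have hw := hL.nonneg
  have hw1 := hL.lt_one
  have hT := hL.two_le
  simp only at hs hst htT hne
  refine sub_ne_zero.2 fun heq => ?_
  rcases htT.eq_or_lt with rfl | htT
  · exact hne ⟨(hL.injOn ⟨hw, by linarith⟩ ⟨hs, hst⟩ (hL.apply_end.symm.trans heq)).symm, rfl⟩
  · exact hst.ne' (hL.injOn ⟨by linarith, htT⟩ ⟨hs, by linarith⟩ heq)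

lemma continuousOn_fst (hL : IsTranslationLasso g L w T) :
    ContinuousOn (fun p : ℝ × ℝ => L p.1) (chordDomain w T) :=
  hL.continuousOn.comp (by fun_prop) fun _ ⟨h0, hlt, hT, _⟩ => ⟨h0, by linarith⟩

lemma continuousOn_snd (hL : IsTranslationLasso g L w T) :
    ContinuousOn (fun p : ℝ × ℝ => L p.2) (chordDomain w T) :=
  hL.continuousOn.comp (by fun_prop) fun _ ⟨h0, hlt, hT, _⟩ => ⟨by linarith, hT⟩

lemma exists_chord_log (hL : IsTranslationLasso g L w T) :
    ∃ Θ : ℝ × ℝ → ℂ, ContinuousOn Θ (chordDomain w T) ∧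
      ∀ p ∈ chordDomain w T, Complex.exp (Θ p) = L p.2 - L p.1 := by
  have hT := hL.two_le
  refine exists_continuousOn_log_of_starConvex ?_ (starConvex_chordDomain (by linarith))
    (hL.continuousOn_snd.sub hL.continuousOn_fst) fun p => hL.chord_ne_zero
  exact ⟨le_rfl, zero_lt_one, by simp only; linarith, fun h => by simp only at h; linarith⟩

lemma mem_chordDomain_add_one (hL : IsTranslationLasso g L w T) {s : ℝ}
    (hs : s ∈ Icc 0 (T - 1)) : (s, s + 1) ∈ chordDomain w T :=
  ⟨hs.1, lt_add_one s, by simp only; linarith [hs.2],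
    fun h => by simp only at h; linarith [hL.lt_one, hL.two_le]⟩

lemma mem_chordDomain_end (hL : IsTranslationLasso g L w T) {s : ℝ} (hs : s ∈ Ioo w T) :
    (s, T) ∈ chordDomain w T :=
  ⟨hL.nonneg.trans hs.1.le, hs.2, le_rfl, fun h => hs.1.ne' h.1⟩

lemma mem_chordDomain_start (hL : IsTranslationLasso g L w T) {s : ℝ} (hs : s ∈ Ioo w T) :
    (w, s) ∈ chordDomain w T :=
  ⟨hL.nonneg, hs.1, hs.2.le, fun h => hs.2.ne h.2⟩

section Comparison

variable (hL : IsTranslationLasso g L w T)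
  (hΘ_exp : ∀ p ∈ chordDomain w T, Complex.exp (Θ p) = L p.2 - L p.1)

include hL hΘ_exp

lemma exp_chord_log_end_sub {s : ℝ} (hs : s ∈ Ioo w T) :
    Complex.exp (Θ (s, T) - Θ (w, s)) = -1 := by
  have h_start := hL.mem_chordDomain_start hs
  rw [Complex.exp_sub, hΘ_exp _ (hL.mem_chordDomain_end hs), hΘ_exp _ h_start, hL.apply_end,
    ← neg_sub (L s) (L w), neg_div, div_self (hL.chord_ne_zero h_start)]

variable (hΘ : ContinuousOn Θ (chordDomain w T))

include hΘ

lemma displacement_log_sub_chord_log (hΞ : Continuous Ξ)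
    (hΞ_exp : ∀ z, Complex.exp (Ξ z) = g z - z) {s t : ℝ}
    (hs : s ∈ Icc 0 (T - 1)) (ht : t ∈ Icc 0 (T - 1)) :
    Ξ (L s) - Θ (s, s + 1) = Ξ (L t) - Θ (t, t + 1) :=
  sub_eq_sub_of_exp_eq (F := fun s => Ξ (L s)) (G := fun s => Θ (s, s + 1)) isPreconnected_Icc
    (hΞ.comp_continuousOn (hL.continuousOn.mono (Icc_subset_Icc_right (by linarith))))
    (hΘ.comp (by fun_prop) fun _ => hL.mem_chordDomain_add_one)
    (fun r hr => by rw [hΞ_exp, hL.map_apply r hr, hΘ_exp _ (hL.mem_chordDomain_add_one hr)]) hs ht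

lemma displacement_log_sub_symmLog_add_chord_log (hE : IsSymmLog g E) (hΞ : Continuous Ξ)
    (hΞ_exp : ∀ z, Complex.exp (Ξ z) = g z - z) {s t : ℝ} (hs : s ∈ Icc 1 T) (ht : t ∈ Icc 1 T) :
    Ξ (L s) - (E (L s, L (s - 1)) + Θ (s - 1, s)) =
      Ξ (L t) - (E (L t, L (t - 1)) + Θ (t - 1, t)) := by
  have pred_mem {r : ℝ} (hr : r ∈ Icc 1 T) : r - 1 ∈ Icc 0 (T - 1) :=
    ⟨by linarith [hr.1], by linarith [hr.2]⟩
  have mem_dom {r : ℝ} (hr : r ∈ Icc 1 T) : (r - 1, r) ∈ chordDomain w T := by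
    simpa using hL.mem_chordDomain_add_one (pred_mem hr)
  have hL_cont : ContinuousOn L (Icc 1 T) :=
    hL.continuousOn.mono (Icc_subset_Icc_left zero_le_one)
  have hL_pred : ContinuousOn (fun r => L (r - 1)) (Icc 1 T) :=
    hL.continuousOn.comp (by fun_prop) fun r hr =>
      Icc_subset_Icc_right (by linarith) (pred_mem hr)
  refine sub_eq_sub_of_exp_eq (F := fun r => Ξ (L r))
    (G := fun r => E (L r, L (r - 1)) + Θ (r - 1, r)) isPreconnected_Icc
    (hΞ.comp_continuousOn hL_cont) (.add ?_ (hΘ.comp (by fun_prop) fun _ => mem_dom))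
    (fun r hr => ?_) hs ht
  · exact hE.continuousOn.comp (hL_cont.prodMk hL_pred) fun r hr =>
      sub_ne_zero.1 (hL.chord_ne_zero (mem_dom hr))
  · rw [Complex.exp_add, hΞ_exp, hΘ_exp _ (mem_dom hr),
      hE.exp_mul_sub _ _ (sub_ne_zero.1 (hL.chord_ne_zero (mem_dom hr))),
      hL.map_apply _ (pred_mem hr), sub_add_cancel]

lemma symmLog_add_chord_log_sub_chord_log (hE : IsSymmLog g E) {s s' t t' : ℝ}
    (hs : 0 ≤ s) (hst : s < t) (ht : t ≤ T - 1) (hs' : 0 ≤ s') (hst' : s' < t')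
    (ht' : t' ≤ T - 1) :
    E (L t, L s) + Θ (s, t) - Θ (s + 1, t + 1) =
      E (L t', L s') + Θ (s', t') - Θ (s' + 1, t' + 1) := by
  let R : Set (ℝ × ℝ) := {p | 0 ≤ p.1 ∧ p.1 < p.2 ∧ p.2 ≤ T - 1}
  have hR : Convex ℝ R := by
    rintro p ⟨hp0, hp, hpT⟩ q ⟨hq0, hq, hqT⟩ a b ha hb hab
    refine ⟨?_, ?_, ?_⟩ <;> simp only [Prod.fst_add, Prod.snd_add, Prod.smul_fst, Prod.smul_snd,
      smul_eq_mul]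
    · positivity
    · rcases ha.eq_or_lt with rfl | ha' <;> nlinarith
    · nlinarith
  have hR_dom {p : ℝ × ℝ} (hp : p ∈ R) : p ∈ chordDomain w T :=
    ⟨hp.1, hp.2.1, by linarith [hp.2.2], fun h => by linarith [hp.2.2, h.2]⟩
  have hR_dom' {p : ℝ × ℝ} (hp : p ∈ R) : (p.1 + 1, p.2 + 1) ∈ chordDomain w T :=
    ⟨by simp only; linarith [hp.1], by simpa using hp.2.1, by simp only; linarith [hp.2.2],
      fun h => by simp only at h; linarith [hp.1, hL.lt_one, h.1]⟩
  have apply_ne {p : ℝ × ℝ} (hp : p ∈ R) : L p.2 ≠ L p.1 :=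
    sub_ne_zero.1 (hL.chord_ne_zero (hR_dom hp))
  refine sub_eq_sub_of_exp_eq (F := fun p : ℝ × ℝ => E (L p.2, L p.1) + Θ p)
    (G := fun p => Θ (p.1 + 1, p.2 + 1)) (x := (s, t)) (y := (s', t')) hR.isPreconnected
    (.add ?_ (hΘ.mono fun _ => hR_dom)) (hΘ.comp (by fun_prop) fun _ => hR_dom')
    (fun p hp => ?_) ⟨hs, hst, ht⟩ ⟨hs', hst', ht'⟩
  · exact hE.continuousOn.comp ((hL.continuousOn_snd.mono fun _ => hR_dom).prodMk
      (hL.continuousOn_fst.mono fun _ => hR_dom)) fun _ => apply_ne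
  · rw [Complex.exp_add, hΘ_exp _ (hR_dom hp), hΘ_exp _ (hR_dom' hp),
      hE.exp_mul_sub _ _ (apply_ne hp), hL.map_apply _ ⟨hp.1.trans hp.2.1.le, hp.2.2⟩,
      hL.map_apply _ ⟨hp.1, hp.2.1.le.trans hp.2.2⟩]

lemma chord_log_end_sub {s t : ℝ} (hs : s ∈ Ioo w T) (ht : t ∈ Ioo w T) :
    Θ (s, T) - Θ (w, s) = Θ (t, T) - Θ (w, t) :=
  eq_of_exp_eq_const (F := fun s => Θ (s, T) - Θ (w, s)) isPreconnected_Ioo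
    ((hΘ.comp (by fun_prop) fun _ => hL.mem_chordDomain_end).sub
      (hΘ.comp (by fun_prop) fun _ => hL.mem_chordDomain_start))
    (fun _ => hL.exp_chord_log_end_sub hΘ_exp) hs ht

end Comparison

-- The comparisons add up to `2 * (Θ (w + 1, T) - Θ (w, w + 1)) = 0`, the exponential of whose half
-- is `-1`: the displacement of `g` would turn by two different angles along the closed curve.
lemma exists_fixed_point (hL : IsTranslationLasso g L w T) (hg : IsPositiveEmbedding g) :
    ∃ z, g z = z := by
  by_contra! hfix
  obtain ⟨E, hE⟩ := hg.exists_isSymmLog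
  have hg_cont := hg.continuous
  obtain ⟨Ξ, hΞ, hΞ_exp⟩ := exists_continuousOn_log_of_starConvex (mem_univ (0 : ℂ))
    (starConvex_univ _) (v := fun z => g z - z) (by fun_prop)
    fun z _ => sub_ne_zero.2 (hfix z)
  rw [continuousOn_univ] at hΞ
  replace hΞ_exp z := hΞ_exp z (mem_univ z)
  obtain ⟨Θ, hΘ, hΘ_exp⟩ := hL.exists_chord_log
  have hw := hL.nonneg
  have hw1 := hL.lt_one
  have hT := hL.two_le
  have cmp₁ := hL.displacement_log_sub_chord_log hΘ_exp hΘ hΞ hΞ_exp (s := T - 1) (t := w)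
    ⟨by linarith, le_rfl⟩ ⟨hw, by linarith⟩
  have cmp₂ := hL.displacement_log_sub_symmLog_add_chord_log hΘ_exp hΘ hE hΞ hΞ_exp
    (s := T - 1) (t := T) ⟨by linarith, by linarith⟩ ⟨by linarith, le_rfl⟩
  have cmp₃ := hL.symmLog_add_chord_log_sub_chord_log hΘ_exp hΘ hE (s := T - 1 - 1) (t := T - 1)
    (s' := w) (t' := T - 1) (by linarith) (by linarith) le_rfl hw (by linarith) le_rfl
  have cmp₄ := hL.chord_log_end_sub hΘ_exp hΘ (s := w + 1) (t := T - 1)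
    ⟨by linarith, by linarith⟩ ⟨by linarith, by linarith⟩
  have hsymm : E (L w, L (T - 1)) = E (L (T - 1), L w) := hE.symm _ _ <| by
    have := hL.chord_ne_zero (hL.mem_chordDomain_add_one (s := T - 1) ⟨by linarith, le_rfl⟩)
    rwa [sub_add_cancel, hL.apply_end, sub_ne_zero] at this
  rw [hL.apply_end] at cmp₂
  rw [sub_add_cancel] at cmp₁ cmp₃
  have hzero : Θ (w + 1, T) - Θ (w, w + 1) = 0 := by
    rw [sub_add_cancel] at cmp₃
    linear_combination (-cmp₁ + cmp₂ + cmp₃ - hsymm + cmp₄) / 2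
  have hexp := hL.exp_chord_log_end_sub hΘ_exp (s := w + 1) ⟨by linarith, by linarith⟩
  rw [hzero, Complex.exp_zero] at hexp
  norm_num at hexp

end IsTranslationLasso

/-! ### Translation arcs -/

/-- A translation arc of `g`: an arc `α : [0, 1] → ℂ` from a point to its image by `g` that meets
its own image by `g` only at that image point. -/
structure IsTranslationArc (g : ℂ → ℂ) (α : ℝ → ℂ) : Prop where
  continuous : Continuous α
  apply_one : α 1 = g (α 0)
  injOn : InjOn α (Icc 0 1)
  ne_map_apply : ∀ s ∈ Icc (0 : ℝ) 1, ∀ t ∈ Ioo (0 : ℝ) 1, α s ≠ g (α t)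

/-- The union of the two half-lines issuing from `x` through `p` and `q`, parametrised by the whole
line so as to go from `p` to `q` through `x` over `[0, 1]`. -/
def brokenArc {V : Type*} [AddCommGroup V] [Module ℝ V] (x p q : V) (u : ℝ) : V :=
  x + max (1 - 2 * u) 0 • (p - x) + max (2 * u - 1) 0 • (q - x)

section NormedSpace

variable {V : Type*} [NormedAddCommGroup V] [NormedSpace ℝ V]

-- Take the least radius for which a closed ball about `x` meets its image.
lemma exists_critical_radius [ProperSpace V] {g : V → V} (hg : Continuous g) (hg_open : IsOpenMap g)
    (hfix : ∀ z, g z ≠ z) (x : V) :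
    ∃ p, 0 < dist p x ∧ dist (g p) x = dist p x ∧
      ∀ y, dist y x < dist p x → dist p x < dist (g y) x := by
  obtain ⟨p, hp⟩ := Continuous.exists_forall_le (f := fun y => max (dist y x) (dist (g y) x))
    (by fun_prop)
    (tendsto_atTop_mono (fun y => le_max_left _ _) (tendsto_dist_right_cocompact_atTop x))
  set r := max (dist p x) (dist (g p) x)
  have hr : 0 < r := by
    by_contra! hle
    have hpx : p = x := dist_le_zero.1 ((le_max_left _ _).trans hle)
    have hgpx : g p = x := dist_le_zero.1 ((le_max_right _ _).trans hle)
    exact hfix p (hgpx.trans hpx.symm)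
  have not_both {y : V} (hy : y ∈ ball x r) : g y ∉ ball x r := fun hgy =>
    (hp y).not_gt (max_lt hy hgy)
  have lt_dist_map {y : V} (hy : dist y x < r) : r < dist (g y) x := by
    by_contra! hgy
    obtain ⟨_, ⟨z, hz, rfl⟩, hgz⟩ := mem_closure_iff.1
      ((closure_ball x hr.ne').ge (mem_closedBall.2 hgy)) _ (hg_open _ isOpen_ball)
      (mem_image_of_mem g (mem_ball.2 hy))
    exact not_both hz hgz
  have le_dist_map {y : V} (hy : dist y x ≤ r) : r ≤ dist (g y) x := by
    by_contra! hgy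
    obtain ⟨z, hz, hz'⟩ := mem_closure_iff.1
      ((closure_ball x hr.ne').ge (mem_closedBall.2 hy)) _ (isOpen_ball.preimage hg)
      (mem_ball.2 hgy)
    exact not_both hz' hz
  have hpr : dist p x = r :=
    (le_max_left _ _).antisymm (not_lt.1 fun h => (lt_dist_map h).not_ge (le_max_right _ _))
  have hgpr : dist (g p) x = r := (le_max_right _ _).antisymm (le_dist_map hpr.le)
  exact ⟨p, hpr ▸ hr, hgpr.trans hpr.symm, fun y => hpr ▸ lt_dist_map⟩

variable {x p q : V} {u : ℝ}

lemma continuous_brokenArc : Continuous (brokenArc x p q) := by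
  unfold brokenArc
  fun_prop

lemma brokenArc_of_le (hu : u ≤ 1 / 2) : brokenArc x p q u = x + (1 - 2 * u) • (p - x) := by
  rw [brokenArc, max_eq_left (by linarith), max_eq_right (by linarith), zero_smul, add_zero]

lemma brokenArc_of_ge (hu : 1 / 2 ≤ u) : brokenArc x p q u = x + (2 * u - 1) • (q - x) := by
  rw [brokenArc, max_eq_right (by linarith), max_eq_left (by linarith), zero_smul, add_zero]

lemma dist_brokenArc (hq : dist q x = dist p x) :
    dist (brokenArc x p q u) x = |1 - 2 * u| * dist p x := by
  rcases le_total u (1 / 2) with hu | hu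
  · rw [brokenArc_of_le hu, dist_self_add_left, norm_smul, Real.norm_eq_abs, dist_eq_norm]
  · rw [brokenArc_of_ge hu, dist_self_add_left, norm_smul, Real.norm_eq_abs, abs_sub_comm,
      ← dist_eq_norm, hq]

lemma brokenArc_injective (hp : 0 < dist p x) (hq : dist q x = dist p x) (hqp : q ≠ p) :
    Function.Injective (brokenArc x p q) := by
  refine .of_lt_imp_ne fun u v huv heq => ?_
  have habs : |1 - 2 * u| = |1 - 2 * v| := mul_right_cancel₀ hp.ne' <| by
    rw [← dist_brokenArc hq, heq, dist_brokenArc hq]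
  obtain rfl : v = 1 - u := by
    rcases abs_eq_abs.1 habs with h | h <;> linarith
  rw [brokenArc_of_le (by linarith), brokenArc_of_ge (by linarith),
    show 2 * (1 - u) - 1 = 1 - 2 * u by ring] at heq
  exact hqp (sub_left_injective
    (smul_right_injective V (by linarith : 1 - 2 * u ≠ 0) (add_left_cancel heq))).symm

end NormedSpace

lemma exists_isTranslationArc_through {g : ℂ → ℂ} (hg : Continuous g) (hg_open : IsOpenMap g)
    (hfix : ∀ z, g z ≠ z) (x : ℂ) : ∃ α, IsTranslationArc g α ∧ α (1 / 2) = x := by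
  obtain ⟨p, hp, hgp, hball⟩ := exists_critical_radius hg hg_open hfix x
  refine ⟨brokenArc x p (g p), ⟨continuous_brokenArc, ?_,
    (brokenArc_injective hp hgp (hfix p)).injOn, fun s hs t ht heq => ?_⟩, ?_⟩
  · rw [brokenArc_of_le (u := 0) (by norm_num), brokenArc_of_ge (u := 1) (by norm_num)]
    norm_num
  · have ht' : |1 - 2 * t| < 1 := abs_lt.2 ⟨by linarith [ht.2], by linarith [ht.1]⟩
    have hs' : |1 - 2 * s| ≤ 1 := abs_le.2 ⟨by linarith [hs.2], by linarith [hs.1]⟩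
    have hlt := hball (brokenArc x p (g p) t) (by rw [dist_brokenArc hgp]; nlinarith)
    rw [← heq, dist_brokenArc hgp] at hlt
    nlinarith
  · rw [brokenArc_of_le le_rfl]
    norm_num

/-! ### Brouwer's lemma on fixed-point-free embeddings -/

lemma injOn_of_lt_imp_ne {X Y : Type*} [LinearOrder X] {φ : X → Y} {S : Set X}
    (h : ∀ s ∈ S, ∀ t ∈ S, s < t → φ s ≠ φ t) : InjOn φ S :=
  injOn_iff_injective.2 (.of_lt_imp_ne fun s t => h s s.2 t t.2)

/-- The half-line formed by an arc `α : [0, 1] → ℂ` and its successive images by `g`. -/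
def translationLine (g : ℂ → ℂ) (α : ℝ → ℂ) (s : ℝ) : ℂ :=
  g^[⌊s⌋₊] (α (s - ⌊s⌋₊))

lemma translationLine_add_natCast (g : ℂ → ℂ) (α : ℝ → ℂ) {s : ℝ} (hs : 0 ≤ s) (k : ℕ) :
    translationLine g α (s + k) = g^[k] (translationLine g α s) := by
  rw [translationLine, Nat.floor_add_natCast hs, Nat.cast_add, add_sub_add_right_eq_sub,
    Nat.add_comm, Function.iterate_add_apply, translationLine]

lemma translationLine_add_one (g : ℂ → ℂ) (α : ℝ → ℂ) {s : ℝ} (hs : 0 ≤ s) :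
    translationLine g α (s + 1) = g (translationLine g α s) := by
  simpa using translationLine_add_natCast g α hs 1

namespace IsTranslationArc

variable {g : ℂ → ℂ} {α : ℝ → ℂ}

lemma translationLine_eq (hα : IsTranslationArc g α) {s : ℝ} (hs : s ∈ Icc (0 : ℝ) 1) :
    translationLine g α s = α s := by
  rcases hs.2.eq_or_lt with rfl | hs1
  · simp [translationLine, hα.apply_one]
  · simp [translationLine, Nat.floor_eq_zero.2 hs1]

lemma continuousOn_translationLine (hα : IsTranslationArc g α) (hg : Continuous g) :
    ContinuousOn (translationLine g α) (Ici 0) := by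
  have h_piece (k : ℕ) : ContinuousOn (translationLine g α) (Icc k (k + 1)) := by
    have hcont : Continuous fun s => g^[k] (α (s - k)) :=
      (hg.iterate k).comp (hα.continuous.comp (by fun_prop))
    refine hcont.continuousOn.congr fun s hs => ?_
    have hs' : s - k ∈ Icc (0 : ℝ) 1 := ⟨by linarith [hs.1], by linarith [hs.2]⟩
    simpa [hα.translationLine_eq hs'] using translationLine_add_natCast g α hs'.1 k
  have h_init (n : ℕ) : ContinuousOn (translationLine g α) (Icc 0 n) := by
    induction n with
    | zero => simp
    | succ n ih =>
      rw [Nat.cast_succ, ← Icc_union_Icc_eq_Icc n.cast_nonneg (by linarith)]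
      exact ih.union_of_isClosed (h_piece n) isClosed_Icc isClosed_Icc
  intro s hs
  obtain ⟨n, hn⟩ := exists_nat_gt s
  exact (h_init n s ⟨hs, hn.le⟩).mono_of_mem_nhdsWithin
    (inter_mem_nhdsWithin _ (Iic_mem_nhds hn))

lemma injOn_translationLine (hα : IsTranslationArc g α) (hg : Function.Injective g) :
    InjOn (translationLine g α) (Ico 0 2) := by
  have apply_pred {s : ℝ} (hs : 1 ≤ s) :
      translationLine g α s = g (translationLine g α (s - 1)) := by
    simpa using translationLine_add_one g α (sub_nonneg.2 hs)
  have inj_first {s t : ℝ} (hs : s ∈ Icc (0 : ℝ) 1) (ht : t ∈ Icc (0 : ℝ) 1)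
      (heq : translationLine g α s = translationLine g α t) : s = t := by
    rw [hα.translationLine_eq hs, hα.translationLine_eq ht] at heq
    exact hα.injOn hs ht heq
  refine injOn_of_lt_imp_ne fun s hs t ht hst heq => ?_
  rcases le_or_gt t 1 with ht1 | ht1
  · exact hst.ne (inj_first ⟨hs.1, by linarith⟩ ⟨ht.1, ht1⟩ heq)
  rcases le_or_gt s 1 with hs1 | hs1
  · have ht' : t - 1 ∈ Ioo (0 : ℝ) 1 := ⟨by linarith, by linarith [ht.2]⟩
    rw [apply_pred ht1.le, hα.translationLine_eq ⟨hs.1, hs1⟩,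
      hα.translationLine_eq (Ioo_subset_Icc_self ht')] at heq
    exact hα.ne_map_apply s ⟨hs.1, hs1⟩ _ ht' heq
  · rw [apply_pred ht1.le, apply_pred hs1.le] at heq
    have := inj_first ⟨by linarith, by linarith [hs.2]⟩ ⟨by linarith, by linarith [ht.2]⟩ (hg heq)
    linarith

lemma add_one_le_of_translationLine_eq (hα : IsTranslationArc g α) (hg : Function.Injective g)
    {s t : ℝ} (hs : 0 ≤ s) (hst : s < t) (heq : translationLine g α s = translationLine g α t) :
    s + 1 ≤ t := by
  by_contra! hlt
  have hfloor := Nat.floor_le hs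
  have hlt_floor := Nat.lt_floor_add_one s
  have hs' : s - ⌊s⌋₊ ∈ Ico (0 : ℝ) 2 := ⟨by linarith, by linarith⟩
  have ht' : t - ⌊s⌋₊ ∈ Ico (0 : ℝ) 2 := ⟨by linarith, by linarith⟩
  have heq' := hα.injOn_translationLine hg hs' ht' <| hg.iterate ⌊s⌋₊ <| by
    rwa [← translationLine_add_natCast g α hs'.1, ← translationLine_add_natCast g α ht'.1,
      sub_add_cancel, sub_add_cancel]
  linarith

lemma exists_first_self_intersection (hα : IsTranslationArc g α) (hg : IsPositiveEmbedding g)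
    {s₀ t₀ : ℝ} (hs₀ : 0 ≤ s₀) (hst₀ : s₀ < t₀)
    (heq₀ : translationLine g α s₀ = translationLine g α t₀) :
    ∃ w T, 0 ≤ w ∧ w < T ∧ translationLine g α w = translationLine g α T ∧
      InjOn (translationLine g α) (Ico 0 T) := by
  let L := translationLine g α
  have hgap := fun {s t} => hα.add_one_le_of_translationLine_eq hg.injective (s := s) (t := t)
  let K₀ : Set (ℝ × ℝ) := (Icc 0 t₀ ×ˢ Icc 0 t₀) ∩ {p | p.1 + 1 ≤ p.2}
  have hK₀ : IsCompact K₀ := (isCompact_Icc.prod isCompact_Icc).inter_right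
    (isClosed_le (by fun_prop) (by fun_prop))
  let K : Set (ℝ × ℝ) := K₀ ∩ (fun p => L p.1 - L p.2) ⁻¹' {0}
  have hL := hα.continuousOn_translationLine hg.continuous
  have hdiff : ContinuousOn (fun p : ℝ × ℝ => L p.1 - L p.2) K₀ :=
    (hL.comp (by fun_prop) fun p hp => hp.1.1.1).sub (hL.comp (by fun_prop) fun p hp => hp.1.2.1)
  have hK : IsCompact K := hK₀.of_isClosed_subset
    (hdiff.preimage_isClosed_of_isClosed hK₀.isClosed isClosed_singleton) inter_subset_left
  have mem_K {s t : ℝ} (hs : 0 ≤ s) (hst : s < t) (ht : t ≤ t₀) (heq : L s = L t) :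
      (s, t) ∈ K :=
    ⟨⟨⟨⟨hs, by linarith⟩, by linarith, ht⟩, hgap hs hst heq⟩, sub_eq_zero.2 heq⟩
  obtain ⟨⟨w, T⟩, ⟨⟨⟨⟨hw, -⟩, -, hT⟩, hwT⟩, heq⟩, hmin⟩ :=
    hK.exists_isMinOn ⟨_, mem_K hs₀ hst₀ le_rfl heq₀⟩ (f := Prod.snd) continuous_snd.continuousOn
  refine ⟨w, T, hw, (lt_add_one w).trans_le hwT, sub_eq_zero.1 heq,
    injOn_of_lt_imp_ne fun s hs t ht hst heq' => ?_⟩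
  exact ht.2.not_ge (isMinOn_iff.1 hmin _ (mem_K hs.1 hst (ht.2.le.trans hT) heq'))

lemma exists_isTranslationLasso (hα : IsTranslationArc g α) (hg : IsPositiveEmbedding g)
    {s₀ t₀ : ℝ} (hs₀ : 0 ≤ s₀) (hst₀ : s₀ < t₀)
    (heq₀ : translationLine g α s₀ = translationLine g α t₀) :
    ∃ w T, IsTranslationLasso g (translationLine g α) w T := by
  obtain ⟨w, T, hw, hwT, heq, hinj⟩ := hα.exists_first_self_intersection hg hs₀ hst₀ heq₀
  refine ⟨w, T, (hα.continuousOn_translationLine hg.continuous).mono Icc_subset_Ici_self, hinj, hw,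
    ?_, ?_, heq.symm, fun s hs => (translationLine_add_one g α hs.1).symm⟩
  · by_contra! hw1
    have hpred : translationLine g α (w - 1) = translationLine g α (T - 1) := hg.injective <| by
      rwa [← translationLine_add_one g α (by linarith), ← translationLine_add_one g α (by linarith),
        sub_add_cancel, sub_add_cancel]
    have := hinj ⟨by linarith, by linarith⟩ ⟨by linarith, by linarith⟩ hpred
    linarith
  · by_contra! hT2
    exact hwT.ne (hα.injOn_translationLine hg.injective ⟨hw, by linarith⟩ ⟨by linarith, hT2⟩ heq)

end IsTranslationArc

theorem IsPositiveEmbedding.iterate_ne_self {g : ℂ → ℂ} (hg : IsPositiveEmbedding g)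
    (hfix : ∀ z, g z ≠ z) {n : ℕ} (hn : 0 < n) (x : ℂ) : g^[n] x ≠ x := by
  intro hx
  obtain ⟨α, hα, hαx⟩ :=
    exists_isTranslationArc_through hg.continuous hg.isOpenEmbedding.isOpenMap hfix x
  have h_half : translationLine g α (1 / 2) = x := by
    rw [hα.translationLine_eq ⟨by norm_num, by norm_num⟩, hαx]
  obtain ⟨w, T, hL⟩ := hα.exists_isTranslationLasso hg (s₀ := 1 / 2) (t₀ := 1 / 2 + n)
    (by norm_num) (by simpa using hn)
    (by rw [translationLine_add_natCast g α (by norm_num), h_half, hx])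
  obtain ⟨z, hz⟩ := hL.exists_fixed_point hg
  exact hfix z hz

/-! ### Moving points by embeddings supported in small discs -/

lemma mapsTo_of_injective_of_eqOn_compl {X : Type*} {φ : X → X} {D : Set X}
    (hφ : Function.Injective φ) (hφD : EqOn φ id Dᶜ) : MapsTo φ D D := by
  intro z hz
  by_contra hφz
  exact hφz ((hφ (hφD hφz)).symm ▸ hz)

lemma abs_tent_sub_tent_le {X : Type*} [PseudoMetricSpace X] (a : X) {R : ℝ} (hR : 0 < R)
    (x y : X) :
    |max (1 - dist x a / R) 0 - max (1 - dist y a / R) 0| ≤ dist x y / R := calc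
  _ ≤ |(1 - dist x a / R) - (1 - dist y a / R)| := abs_max_sub_max_le_abs ..
  _ = |dist y a - dist x a| / R := by
    rw [show 1 - dist x a / R - (1 - dist y a / R) = (dist y a - dist x a) / R by ring, abs_div,
      abs_of_pos hR]
  _ ≤ dist x y / R := by
    gcongr
    exact dist_comm x y ▸ abs_dist_sub_le y x a

lemma exists_push_of_mem_ball {a b : ℂ} {R : ℝ} (hb : b ∈ ball a R) :
    ∃ φ, IsPositiveEmbedding φ ∧ φ a = b ∧ EqOn φ id (ball a R)ᶜ := by
  have hR : 0 < R := dist_nonneg.trans_lt hb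
  let φ : ℂ → ℂ := fun z => z + (max (1 - dist z a / R) 0 : ℝ) * (b - a)
  let c : NNReal := ⟨dist b a / R, by positivity⟩
  have hc : c < 1 := (div_lt_one hR).2 hb
  refine ⟨φ, .of_norm_sub_id_le hc fun x y => ?_, by simp [φ], fun z hz => ?_⟩
  · calc ‖φ x - φ y - (x - y)‖
        = |max (1 - dist x a / R) 0 - max (1 - dist y a / R) 0| * dist b a := by
          rw [← Real.norm_eq_abs, ← Complex.norm_real, dist_eq_norm b, ← norm_mul]
          push_cast [φ]
          ring_nf
      _ ≤ dist x y / R * dist b a := by gcongr; exact abs_tent_sub_tent_le a hR x y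
      _ = c * ‖x - y‖ := by
        rw [← dist_eq_norm]
        change _ = dist b a / R * dist x y
        ring
  · have : 1 - dist z a / R ≤ 0 := sub_nonpos.2 ((one_le_div hR).2 (not_lt.1 hz))
    simp [φ, max_eq_right this]

lemma exists_push_of_isPreconnected {D : Set ℂ} (hD : IsOpen D) (hD' : IsPreconnected D) {a b : ℂ}
    (ha : a ∈ D) (hb : b ∈ D) : ∃ φ, IsPositiveEmbedding φ ∧ φ a = b ∧ EqOn φ id Dᶜ := by
  let S : Set ℂ := {b ∈ D | ∃ φ, IsPositiveEmbedding φ ∧ φ a = b ∧ EqOn φ id Dᶜ}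
  have ball_subset {x : ℂ} (hx : x ∈ S) {R : ℝ} (hR : ball x R ⊆ D) : ball x R ⊆ S := by
    intro y hy
    obtain ⟨-, φ, hφ, rfl, hφD⟩ := hx
    obtain ⟨ψ, hψ, hψa, hψD⟩ := exists_push_of_mem_ball hy
    exact ⟨hR hy, ψ ∘ φ, hψ.comp hφ, hψa, fun z hz =>
      (congrArg ψ (hφD hz)).trans (hψD fun hz' => hz (hR hz'))⟩
  have hS : IsOpen S := Metric.isOpen_iff.2 fun x hx =>
    let ⟨R, hR, hRD⟩ := Metric.isOpen_iff.1 hD x hx.1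
    ⟨R, hR, ball_subset hx hRD⟩
  have ha_mem : a ∈ S := ⟨ha, id, .id, rfl, fun _ _ => rfl⟩
  refine (hD'.subset_of_closure_inter_subset hS ⟨a, ha, ha_mem⟩ ?_ hb).2
  rintro y ⟨hy, hyD⟩
  obtain ⟨R, hR, hRD⟩ := Metric.isOpen_iff.1 hD y hyD
  obtain ⟨x, hx, hxy⟩ := Metric.mem_closure_iff.1 hy (R / 2) (half_pos hR)
  refine ball_subset hx ((ball_subset_ball' ?_).trans hRD) hxy
  rw [dist_comm] at hxy
  linarith

lemma exists_push_of_pairwise_disjoint {ι : Type*} {D : ι → Set ℂ} (hD : ∀ i, IsOpen (D i))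
    (hD' : ∀ i, IsPreconnected (D i)) (hdisj : Pairwise (Function.onFun Disjoint D)) {u v : ι → ℂ}
    (hu : ∀ i, u i ∈ D i) (hv : ∀ i, v i ∈ D i) (s : Finset ι) :
    ∃ φ, IsPositiveEmbedding φ ∧ (∀ i ∈ s, φ (u i) = v i ∧ MapsTo φ (D i) (D i)) ∧
      EqOn φ id (⋃ i ∈ s, D i)ᶜ := by
  induction s using Finset.induction_on with
  | empty => exact ⟨id, .id, by simp, fun _ _ => rfl⟩
  | insert j s hj ih =>
    obtain ⟨φ, hφ, hφs, hφD⟩ := ih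
    obtain ⟨ψ, hψ, hψu, hψD⟩ := exists_push_of_isPreconnected (hD j) (hD' j) (hu j) (hv j)
    have hφ_eq {z : ℂ} (hz : z ∈ D j) : φ z = z := hφD <| by
      simp only [mem_compl_iff, mem_iUnion, not_exists]
      exact fun i hi => (hdisj (ne_of_mem_of_not_mem hi hj)).notMem_of_mem_right hz
    have hψ_eq {i : ι} (hi : i ∈ s) {z : ℂ} (hz : z ∈ D i) : ψ z = z :=
      hψD ((hdisj (ne_of_mem_of_not_mem hi hj)).notMem_of_mem_left hz)
    refine ⟨ψ ∘ φ, hψ.comp hφ, fun i hi => ?_, fun z hz => ?_⟩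
    · rcases Finset.mem_insert.1 hi with rfl | hi
      · exact ⟨by rw [Function.comp_apply, hφ_eq (hu i), hψu], fun z hz => by
          simpa only [Function.comp_apply, hφ_eq hz]
            using mapsTo_of_injective_of_eqOn_compl hψ.injective hψD hz⟩
      · obtain ⟨hφu, hφ_maps⟩ := hφs i hi
        exact ⟨by rw [Function.comp_apply, hφu, hψ_eq hi (hv i)], fun z hz => by
          simpa only [Function.comp_apply, hψ_eq hi (hφ_maps hz)] using hφ_maps hz⟩
    · rw [Finset.set_biUnion_insert, compl_union] at hz
      exact (congrArg ψ (hφD hz.2)).trans (hψD hz.1)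

/-! ### Franks' lemma -/

/-- Some positive iterate of `h` takes a point of `A` into `B`. -/
def Visits (h : ℂ → ℂ) (A B : Set ℂ) : Prop :=
  ∃ n > 0, ∃ z ∈ A, h^[n] z ∈ B

lemma iterate_comp_apply_of_forall_lt {α : Type*} {φ h : α → α} {z : α} {n : ℕ} (hn : 0 < n)
    (hφ : ∀ m, 0 < m → m < n → φ (h^[m] z) = h^[m] z) : (φ ∘ h)^[n] z = φ (h^[n] z) := by
  induction n, hn using Nat.le_induction with
  | base => rfl
  | succ n hn ih =>
    rw [Function.iterate_succ_apply', ih fun m hm hmn => hφ m hm (hmn.trans n.lt_succ_self),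
      hφ n hn n.lt_succ_self, Function.comp_apply, Function.iterate_succ_apply']

lemma exists_pos_iterate_eq_self_of_perm {α κ : Type*} [Finite κ] {g : α → α} {z : κ → α}
    {n : κ → ℕ} (hn : ∀ i, 0 < n i) {σ : Equiv.Perm κ} (hσ : ∀ i, g^[n i] (z i) = z (σ i))
    (i : κ) : ∃ N, 0 < N ∧ g^[N] (z i) = z i := by
  have orbit (m : ℕ) : ∃ N ≥ m, g^[N] (z i) = z ((σ ^ m) i) := by
    induction m with
    | zero => exact ⟨0, le_rfl, rfl⟩
    | succ m ih =>
      obtain ⟨N, hN, hNz⟩ := ih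
      exact ⟨n ((σ ^ m) i) + N, by have := hn ((σ ^ m) i); lia, by
        rw [Function.iterate_add_apply, hNz, hσ, pow_succ', Equiv.Perm.mul_apply]⟩
  obtain ⟨N, hN, hNz⟩ := orbit (orderOf σ)
  exact ⟨N, (isOfFinOrder_of_finite σ).orderOf_pos.trans_le hN, by
    rw [hNz, pow_orderOf_eq_one, Equiv.Perm.one_apply]⟩

lemma exists_finset_of_transGen {α : Type*} {R : α → α → Prop} {a b : α}
    (h : Relation.TransGen R a b) :
    ∃ s : Finset α, a ∈ s ∧ ∀ j ∈ s, ∃ k ∈ insert b s, R j k := by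
  induction h with
  | single hab => exact ⟨{a}, by simp, by simpa using .inl hab⟩
  | @tail b c _ hbc ih =>
    obtain ⟨s, ha, hs⟩ := ih
    refine ⟨insert b s, Finset.mem_insert_of_mem ha, fun j hj => ?_⟩
    rcases Finset.mem_insert.1 hj with rfl | hj
    · exact ⟨c, Finset.mem_insert_self _ _, hbc⟩
    · obtain ⟨k, hk, hjk⟩ := hs j hj
      exact ⟨k, Finset.mem_insert_of_mem hk, hjk⟩

lemma nonempty_periodicPts_of_finite {α : Type*} [Finite α] [Nonempty α] (f : α → α) :
    (Function.periodicPts f).Nonempty := by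
  inhabit α
  obtain ⟨m, n, hmn, heq⟩ : ∃ m n, m < n ∧ f^[m] default = f^[n] default := by
    obtain ⟨m, n, hne, heq⟩ := Finite.exists_ne_map_eq_of_infinite fun n : ℕ => f^[n] default
    rcases hne.lt_or_gt with h | h
    exacts [⟨m, n, h, heq⟩, ⟨n, m, h, heq.symm⟩]
  refine ⟨f^[m] default, Function.mk_mem_periodicPts (Nat.sub_pos_of_lt hmn) ?_⟩
  rw [Function.IsPeriodicPt, Function.IsFixedPt, ← Function.iterate_add_apply,
    Nat.sub_add_cancel hmn.le, heq]

lemma exists_perm_of_transGen_self.{u} {α : Type u} {R : α → α → Prop} {a : α}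
    (h : Relation.TransGen R a a) :
    ∃ (κ : Type u) (_ : Finite κ) (_ : Nonempty κ) (e : κ → α) (σ : Equiv.Perm κ),
      Function.Injective e ∧ ∀ j, R (e j) (e (σ j)) := by
  obtain ⟨s, ha, hs⟩ := exists_finset_of_transGen h
  rw [Finset.insert_eq_self.2 ha] at hs
  choose! f hfs hf using hs
  let F : s → s := fun j => ⟨f j, hfs j j.2⟩
  have : Nonempty s := ⟨⟨a, ha⟩⟩
  exact ⟨Function.periodicPts F, inferInstance, (nonempty_periodicPts_of_finite F).to_subtype,
    fun j => j.1, (Function.bijOn_periodicPts F).equiv,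
    Subtype.val_injective.comp Subtype.val_injective, fun j => hf _ j.1.2⟩

lemma comp_ne_self_of_mapsTo {ι : Type*} {h φ : ℂ → ℂ} {D : ι → Set ℂ}
    (hfix : ∀ z, h z ≠ z) (hfree : ∀ i, ∀ z ∈ D i, h z ∉ D i) (hφ : ∀ i, MapsTo φ (D i) (D i))
    (hφD : EqOn φ id (⋃ i, D i)ᶜ) (z : ℂ) : φ (h z) ≠ z := by
  intro hz
  by_cases hD : h z ∈ ⋃ i, D i
  · obtain ⟨i, hi⟩ := mem_iUnion.1 hD
    exact hfree i z (hz ▸ hφ i hi) hi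
  · exact hfix z ((hφD hD).symm.trans hz)

section Franks

variable {ι : Type*} {h : ℂ → ℂ} {D : ι → Set ℂ}

/-- Some point of `D i` enters `D j` before visiting any other member of the family. -/
def VisitsDirectly (h : ℂ → ℂ) (D : ι → Set ℂ) (i j : ι) : Prop :=
  ∃ n > 0, ∃ z ∈ D i, h^[n] z ∈ D j ∧ ∀ m, 0 < m → m < n → ∀ k, h^[m] z ∉ D k

lemma not_forall_visitsDirectly_perm [Finite ι] [Nonempty ι] (hh : IsPositiveEmbedding h)
    (hfix : ∀ z, h z ≠ z) (hD : ∀ i, IsOpen (D i)) (hD' : ∀ i, IsPreconnected (D i))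
    (hdisj : Pairwise (Function.onFun Disjoint D)) (hfree : ∀ i, ∀ z ∈ D i, h z ∉ D i)
    (σ : Equiv.Perm ι) : ¬ ∀ i, VisitsDirectly h D i (σ i) := by
  have := Fintype.ofFinite ι
  intro hσ
  choose n hn v hv hvσ hn_min using hσ
  let u : ι → ℂ := fun j => h^[n (σ.symm j)] (v (σ.symm j))
  have hu (j : ι) : u j ∈ D j := by simpa only [σ.apply_symm_apply] using hvσ (σ.symm j)
  obtain ⟨φ, hφ, hφu, hφD⟩ := exists_push_of_pairwise_disjoint hD hD' hdisj hu hv Finset.univ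
  simp only [Finset.mem_univ, forall_const, iUnion_true] at hφu hφD
  have hg_fix (z : ℂ) : (φ ∘ h) z ≠ z :=
    comp_ne_self_of_mapsTo hfix hfree (fun i => (hφu i).2) hφD z
  have hg_orbit (i : ι) : (φ ∘ h)^[n i] (v i) = v (σ i) := by
    rw [iterate_comp_apply_of_forall_lt (hn i) fun m hm hmn => hφD ?_]
    · simpa only [u, σ.symm_apply_apply] using (hφu (σ i)).1
    · simpa only [mem_compl_iff, mem_iUnion, not_exists] using hn_min i m hm hmn
  obtain ⟨i⟩ := ‹Nonempty ι›
  obtain ⟨N, hN, hNv⟩ := exists_pos_iterate_eq_self_of_perm hn hg_orbit i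
  exact (hφ.comp hh).iterate_ne_self hg_fix hN _ hNv

lemma VisitsDirectly.comp {κ : Type*} {e : κ → ι} {i j : κ}
    (hij : VisitsDirectly h D (e i) (e j)) : VisitsDirectly h (D ∘ e) i j := by
  obtain ⟨n, hn, z, hz, hzj, hmin⟩ := hij
  exact ⟨n, hn, z, hz, hzj, fun m hm hmn k => hmin m hm hmn (e k)⟩

lemma transGen_visitsDirectly {i j : ι} (hij : Visits h (D i) (D j)) :
    Relation.TransGen (VisitsDirectly h D) i j := by
  obtain ⟨n, hn, z, hz, hzj⟩ := hij
  induction n using Nat.strong_induction_on generalizing i z j with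
  | _ n ih =>
    by_cases hmin : ∀ m, 0 < m → m < n → ∀ k, h^[m] z ∉ D k
    · exact .single ⟨n, hn, z, hz, hzj, hmin⟩
    · push Not at hmin
      obtain ⟨m, hm, hmn, k, hk⟩ := hmin
      refine (ih m hmn hm z hz hk).trans (ih (n - m) (by lia) (by lia) _ hk ?_)
      rwa [← Function.iterate_add_apply, Nat.sub_add_cancel hmn.le]

theorem not_transGen_visits_self (hh : IsPositiveEmbedding h) (hfix : ∀ z, h z ≠ z)
    (hD : ∀ i, IsOpen (D i)) (hD' : ∀ i, IsPreconnected (D i))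
    (hdisj : Pairwise (Function.onFun Disjoint D)) (hfree : ∀ i, ∀ z ∈ D i, h z ∉ D i) (i : ι) :
    ¬ Relation.TransGen (fun i j => Visits h (D i) (D j)) i i := by
  intro hi
  obtain ⟨κ, _, _, e, σ, he, hσ⟩ := exists_perm_of_transGen_self
    (hi.trans_induction_on (motive := fun {a b} _ => Relation.TransGen (VisitsDirectly h D) a b)
      transGen_visitsDirectly fun _ _ => .trans)
  exact not_forall_visitsDirectly_perm hh hfix (fun k => hD (e k)) (fun k => hD' (e k))
    (hdisj.comp_of_injective he) (fun k => hfree (e k)) σ fun k => (hσ k).comp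

end Franks

/-! ### Franks' lemma for the deck transformations of an annulus -/

/-- The translate of `D` by `j • c`. -/
def deckTranslate (c : ℂ) (D : Set ℂ) (j : ℤ) : Set ℂ :=
  (· - j • c) ⁻¹' D

section Deck

variable {h : ℂ → ℂ} {c : ℂ} {D : Set ℂ}

lemma map_add_zsmul_of_commute (hc : Function.Commute h (· + c)) (z : ℂ) (j : ℤ) :
    h (z + j • c) = h z + j • c :=
  AddConstMapClass.map_add_zsmul (⟨h, hc⟩ : AddConstMap ℂ ℂ c c) z j

lemma map_sub_zsmul_of_commute (hc : Function.Commute h (· + c)) (z : ℂ) (j : ℤ) :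
    h (z - j • c) = h z - j • c := by
  simpa only [neg_zsmul, ← sub_eq_add_neg] using map_add_zsmul_of_commute hc z (-j)

lemma Visits.deckTranslate_add (hc : Function.Commute h (· + c)) {p : ℤ}
    (hp : Visits h D (deckTranslate c D p)) (i : ℤ) :
    Visits h (deckTranslate c D i) (deckTranslate c D (i + p)) := by
  obtain ⟨n, hn, z, hz, hzp⟩ := hp
  refine ⟨n, hn, z + i • c, by simpa [deckTranslate] using hz, ?_⟩
  rw [map_add_zsmul_of_commute (hc.iterate_left n)]
  simpa only [deckTranslate, mem_preimage, add_zsmul, add_comm (i • c), add_sub_add_right_eq_sub]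
    using hzp

lemma transGen_add_nsmul {R : ℤ → ℤ → Prop} {p : ℤ} (hR : ∀ i, R i (i + p)) {m : ℕ} (hm : 0 < m)
    (i : ℤ) : Relation.TransGen R i (i + m • p) := by
  induction m, hm using Nat.le_induction with
  | base => simpa using .single (hR i)
  | succ m _ ih => exact ih.tail (by simpa only [succ_nsmul, add_assoc] using hR (i + m • p))

theorem not_visits_deckTranslate_of_pos_of_neg (hh : IsPositiveEmbedding h)
    (hfix : ∀ z, h z ≠ z) (hc : Function.Commute h (· + c)) (hD : IsOpen D)
    (hD' : IsPreconnected D) (hdisj : Pairwise (Function.onFun Disjoint (deckTranslate c D)))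
    (hfree : ∀ z ∈ D, h z ∉ D) {p q : ℤ} (hp : 0 < p) (hvisit : Visits h D (deckTranslate c D p))
    (hq : q < 0) : ¬ Visits h D (deckTranslate c D q) := by
  intro hvisit'
  refine not_transGen_visits_self hh hfix (D := deckTranslate c D)
    (fun j => hD.preimage (by fun_prop))
    (fun j => (Homeomorph.subRight (j • c)).isPreconnected_preimage.2 hD') hdisj
    (fun j z hz hz' => hfree _ hz ?_) 0 ?_
  · rwa [map_sub_zsmul_of_commute hc]
  · let R (i j : ℤ) : Prop := Visits h (deckTranslate c D i) (deckTranslate c D j)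
    have up := transGen_add_nsmul (R := R) (hvisit.deckTranslate_add hc) (m := q.natAbs)
      (by lia) 0
    have down := transGen_add_nsmul (R := R) (hvisit'.deckTranslate_add hc) (m := p.toNat)
      (by lia) (0 + q.natAbs • p)
    convert up.trans down using 1
    rw [nsmul_eq_mul, nsmul_eq_mul, Int.toNat_of_nonneg hp.le, Int.ofNat_natAbs_of_nonpos hq.le]
    ring

end Deck

/-! ### Lifting an isotopy through the exponential -/

lemma angVar_eq_of_exp {γ : ℝ → ℂ} {η : unitInterval → ℂ} (hη : Continuous η)
    (hηγ : ∀ t, Complex.exp (η t) = γ t) : angVar γ = (η 1 - η 0).im / (2 * Real.pi) := by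
  have polar (t : unitInterval) : γ t = ‖γ t‖ * Complex.exp ((η t).im * Complex.I) := by
    rw [← hηγ, Complex.norm_exp, Complex.ofReal_exp, ← Complex.exp_add, Complex.re_add_im]
  have hex : ∃ θ : ℝ → ℝ, ContinuousOn θ (Icc 0 1) ∧
      ∀ t ∈ Icc (0 : ℝ) 1, γ t = (‖γ t‖ : ℂ) * Complex.exp ((θ t : ℂ) * Complex.I) := by
    refine ⟨fun t => (η (projIcc 0 1 zero_le_one t)).im, ?_, fun t ht => ?_⟩
    · have := continuous_projIcc (h := zero_le_one (α := ℝ))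
      fun_prop
    · simpa only [projIcc_of_mem _ ht] using polar ⟨t, ht⟩
  rw [angVar, dif_pos hex]
  obtain ⟨hθ, hθγ⟩ := hex.choose_spec
  generalize hex.choose = θ at hθ hθγ ⊢
  have hθ' : Continuous fun t : unitInterval => (θ t : ℂ) :=
    Complex.continuous_ofReal.comp hθ.domRestrict
  have hdiff := sub_eq_sub_of_exp_eq (S := univ) (F := fun t : unitInterval => θ t * Complex.I)
    (G := fun t => (η t).im * Complex.I) isPreconnected_univ
    (hθ'.mul_const _).continuousOn (by fun_prop)
    (fun t _ => mul_left_cancel₀ (by simp [← hηγ]) ((hθγ t t.2).symm.trans (polar t)))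
    (mem_univ 1) (mem_univ 0)
  have him : θ 1 - (η 1).im = θ 0 - (η 0).im := by simpa using congrArg Complex.im hdiff
  rw [Complex.sub_im, show θ 1 - θ 0 = (η 1).im - (η 0).im by linarith]

lemma injective_of_exp_comp {g F : ℂ → ℂ} (hF : Function.Injective F)
    (hgF : ∀ w, Complex.exp (g w) = F (Complex.exp w))
    (hc : Function.Commute g (· + 2 * Real.pi * Complex.I)) : Function.Injective g := by
  intro a b hab
  have hexp : Complex.exp a = Complex.exp b := hF (by rw [← hgF, ← hgF, hab])
  obtain ⟨j, hj⟩ := Complex.exp_eq_exp_iff_exists_int.1 hexp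
  rw [← zsmul_eq_mul] at hj
  rw [hj, map_add_zsmul_of_commute hc, add_eq_left] at hab
  rw [hj, hab, add_zero]

lemma isLocalHomeomorph_of_exp_comp {g : ℂ → ℂ} (hg : Continuous g) (F : ℂ ≃ₜ ℂ)
    (hgF : ∀ w, Complex.exp (g w) = F (Complex.exp w)) : IsLocalHomeomorph g := by
  refine .of_comp ?_ isLocalHomeomorph_exp hg
  rw [show Complex.exp ∘ g = F ∘ Complex.exp from funext hgF]
  exact F.isLocalHomeomorph.comp isLocalHomeomorph_exp

section Lift

variable {f : ℂ ≃ₜ ℂ}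

/-- The isotopy `I` seen from the moving point `I.F t z'`, so that the origin stays fixed. -/
def HIsotopy.recentered (I : HIsotopy f) (z' : ℂ) (t : ℝ) : ℂ ≃ₜ ℂ :=
  (Homeomorph.addLeft z').trans ((I.F t).trans (Homeomorph.subRight (I.F t z')))

lemma HIsotopy.recentered_apply (I : HIsotopy f) (z' : ℂ) (t : ℝ) (w : ℂ) :
    I.recentered z' t w = I.F t (z' + w) - I.F t z' := rfl

lemma HIsotopy.recentered_ne_zero (I : HIsotopy f) (z' : ℂ) (t : ℝ) {w : ℂ} (hw : w ≠ 0) :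
    I.recentered z' t w ≠ 0 := by
  rw [I.recentered_apply, sub_ne_zero]
  exact (I.F t).injective.ne (by simpa using hw)

lemma HIsotopy.continuous_recentered (I : HIsotopy f) (z' : ℂ) :
    Continuous fun p : ℝ × ℂ => I.recentered z' p.1 p.2 :=
  (I.cont.comp (by fun_prop : Continuous fun p : ℝ × ℂ => (p.1, z' + p.2))).sub
    (I.cont.comp (by fun_prop : Continuous fun p : ℝ × ℂ => (p.1, z')))

/-- `G` lifts the isotopy `I`, seen from the moving point `I.F t z'`, to the universal cover
`exp : ℂ → ℂ ∖ {0}`, starting from the identity. -/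
structure IsIsotopyLift (I : HIsotopy f) (z' : ℂ) (G : C(unitInterval × ℂ, ℂ)) : Prop where
  zero_apply : ∀ w, G (0, w) = w
  exp_apply : ∀ t w, Complex.exp (G (t, w)) = I.recentered z' t (Complex.exp w)

lemma exists_isIsotopyLift (I : HIsotopy f) (z' : ℂ) : ∃ G, IsIsotopyLift I z' G := by
  have hcont : Continuous fun p : unitInterval × ℂ => I.recentered z' p.1 (Complex.exp p.2) :=
    (I.continuous_recentered z').comp₂ (f := fun p : unitInterval × ℂ => Complex.exp p.2)
      (continuous_subtype_val.comp continuous_fst) (by fun_prop)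
  have hdiv : Continuous fun p : unitInterval × ℂ =>
      I.recentered z' p.1 (Complex.exp p.2) / Complex.exp p.2 :=
    hcont.div₀ (by fun_prop) fun p => Complex.exp_ne_zero p.2
  obtain ⟨Θ, hΘ, hΘ0⟩ := exists_log_of_homotopy_one ⟨_, hdiv⟩
    (fun p => div_ne_zero (I.recentered_ne_zero z' _ (Complex.exp_ne_zero _))
      (Complex.exp_ne_zero _))
    (fun w => by simp [I.recentered_apply, I.zero])
  refine ⟨⟨fun p => p.2 + Θ p, by fun_prop⟩, fun w => by simp [hΘ0], fun t w => ?_⟩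
  simp only [ContinuousMap.coe_mk, Complex.exp_add, hΘ]
  exact mul_div_cancel₀ _ (Complex.exp_ne_zero w)

namespace IsIsotopyLift

variable {I : HIsotopy f} {z' : ℂ} {G : C(unitInterval × ℂ, ℂ)}

lemma commute_add_two_pi_I (hG : IsIsotopyLift I z' G) (t : unitInterval) :
    Function.Commute (fun w => G (t, w)) (· + 2 * Real.pi * Complex.I) := by
  intro w
  have := sub_eq_sub_of_exp_eq (S := univ) (F := fun t => G (t, w + 2 * Real.pi * Complex.I))
    (G := fun t => G (t, w)) isPreconnected_univ (by fun_prop) (by fun_prop)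
    (fun s _ => by rw [hG.exp_apply, hG.exp_apply, Complex.exp_periodic])
    (mem_univ t) (mem_univ 0)
  simp only [hG.zero_apply, add_sub_cancel_left] at this
  exact (sub_eq_iff_eq_add'.1 this)

lemma isPositiveEmbedding (hG : IsIsotopyLift I z' G) :
    IsPositiveEmbedding fun w => G (1, w) :=
  .of_isotopy G hG.zero_apply
    (fun t => injective_of_exp_comp (I.recentered z' t).injective (hG.exp_apply t)
      (hG.commute_add_two_pi_I t))
    (isLocalHomeomorph_of_exp_comp (by fun_prop) _ (hG.exp_apply 1)).isOpenMap

lemma enlace_eq (hG : IsIsotopyLift I z' G) (w : ℂ) :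
    Enlace I (z' + Complex.exp w) z' = (G (1, w) - w).im / (2 * Real.pi) := by
  rw [Enlace, angVar_eq_of_exp (η := fun t => G (t, w)) (by fun_prop) (hG.exp_apply · w),
    hG.zero_apply]

end IsIsotopyLift

/-- `h` lifts `f` to the universal cover `w ↦ z' + exp w` of `ℂ ∖ {z'}`, and its vertical
displacement measures `Enlace I · z'`. -/
structure IsEnlaceLift (I : HIsotopy f) (z' : ℂ) (h : ℂ → ℂ) : Prop where
  isPositiveEmbedding : IsPositiveEmbedding h
  commute : Function.Commute h (· + 2 * Real.pi * Complex.I)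
  semiconj : Function.Semiconj (z' + Complex.exp ·) h f
  enlace_eq : ∀ w, Enlace I (z' + Complex.exp w) z' = (h w - w).im / (2 * Real.pi)

lemma exists_isEnlaceLift (I : HIsotopy f) {z' : ℂ} (hz' : z' ∈ FixPts f) :
    ∃ h, IsEnlaceLift I z' h := by
  obtain ⟨G, hG⟩ := exists_isIsotopyLift I z'
  refine ⟨fun w => G (1, w), hG.isPositiveEmbedding, hG.commute_add_two_pi_I 1, fun w => ?_,
    hG.enlace_eq⟩
  have hz'_fix : f z' = z' := hz'
  simp [hG.exp_apply, I.recentered_apply, I.one, hz'_fix]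

lemma IsEnlaceLift.sum_enlace_iterate {I : HIsotopy f} {z' : ℂ} {h : ℂ → ℂ}
    (hh : IsEnlaceLift I z' h) (n : ℕ) (w : ℂ) :
    ∑ r ∈ Finset.range n, Enlace I (f^[r] (z' + Complex.exp w)) z' =
      (h^[n] w - w).im / (2 * Real.pi) := by
  have term (r : ℕ) : Enlace I (f^[r] (z' + Complex.exp w)) z' =
      (h^[r + 1] w).im / (2 * Real.pi) - (h^[r] w).im / (2 * Real.pi) := by
    rw [← (hh.semiconj.iterate_right r).eq, hh.enlace_eq, Function.iterate_succ_apply',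
      Complex.sub_im, sub_div]
  simp only [term, Finset.sum_range_sub fun r => (h^[r] w).im / (2 * Real.pi),
    Function.iterate_zero_apply, Complex.sub_im, sub_div]

end Lift

/-! ### Branches of the logarithm on free discs -/

/-- `l` is a continuous branch of `z ↦ log (z - z')` on `U`. -/
structure IsLogBranch (U : Set ℂ) (z' : ℂ) (l : ℂ → ℂ) : Prop where
  continuousOn : ContinuousOn l U
  exp_apply : ∀ z ∈ U, Complex.exp (l z) = z - z'

lemma exists_isLogBranch {U : Set ℂ} (e : U ≃ₜ ℂ) {z' : ℂ} (hz' : z' ∉ U) :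
    ∃ l, IsLogBranch U z' l := by
  obtain ⟨Θ, hΘ, hΘ_exp⟩ := exists_continuousOn_log_of_starConvex (mem_univ (0 : ℂ))
    (starConvex_univ 0) (v := fun w => (e.symm w : ℂ) - z') (by fun_prop)
    (fun w _ => sub_ne_zero.2 (ne_of_mem_of_not_mem (e.symm w).2 hz'))
  have hΘ_cont : Continuous Θ := continuousOn_univ.1 hΘ
  refine ⟨fun z => if hz : z ∈ U then Θ (e ⟨z, hz⟩) else 0, ?_, fun z hz => ?_⟩
  · rw [continuousOn_iff_continuous_domRestrict]
    exact (hΘ_cont.comp e.continuous).congr fun x => by simp [Set.domRestrict]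
  · simp [hz, hΘ_exp]

namespace IsLogBranch

variable {U : Set ℂ} {z' : ℂ} {l : ℂ → ℂ}

lemma add_exp_apply (hl : IsLogBranch U z' l) {z : ℂ} (hz : z ∈ U) :
    z' + Complex.exp (l z) = z := by
  rw [hl.exp_apply z hz, add_sub_cancel]

lemma isOpen_image (hl : IsLogBranch U z' l) (hU : IsOpen U) : IsOpen (l '' U) := by
  have hcomp : Complex.exp ∘ U.domRestrict l = Homeomorph.subRight z' ∘ Subtype.val :=
    funext fun x => hl.exp_apply x x.2
  have hlocal : IsLocalHomeomorph (Complex.exp ∘ U.domRestrict l) := hcomp ▸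
    (Homeomorph.isLocalHomeomorph _).comp hU.isOpenEmbedding_subtypeVal.isLocalHomeomorph
  rw [← range_domRestrict]
  exact (hlocal.of_comp isLocalHomeomorph_exp hl.continuousOn.domRestrict).isOpenMap.isOpen_range

lemma add_exp_mem_of_mem_deckTranslate (hl : IsLogBranch U z' l) {j : ℤ} {w : ℂ}
    (hw : w ∈ deckTranslate (2 * Real.pi * Complex.I) (l '' U) j) : z' + Complex.exp w ∈ U := by
  obtain ⟨z, hz, hzw : l z = w - j • _⟩ := hw
  rwa [← Complex.exp_periodic.sub_zsmul_eq j, ← hzw, hl.add_exp_apply hz]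

lemma pairwise_disjoint_deckTranslate (hl : IsLogBranch U z' l) :
    Pairwise (Function.onFun Disjoint (deckTranslate (2 * Real.pi * Complex.I) (l '' U))) := by
  intro i j hij
  refine disjoint_left.2 fun w hi hj => hij ?_
  obtain ⟨x, hx, hxw : l x = w - i • _⟩ := hi
  obtain ⟨y, hy, hyw : l y = w - j • _⟩ := hj
  have hxy : x = y := by
    rw [← hl.add_exp_apply hx, ← hl.add_exp_apply hy, hxw, hyw]
    simp only [Complex.exp_periodic.sub_zsmul_eq]
  rw [hxy] at hxw
  exact smul_left_injective ℤ Complex.two_pi_I_ne_zero (sub_right_injective (hxw.symm.trans hyw))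

end IsLogBranch

lemma FreeDisc.isPreconnected {f : ℂ ≃ₜ ℂ} {U : Set ℂ} (hU : FreeDisc f U) : IsPreconnected U := by
  obtain ⟨-, ⟨e⟩, -⟩ := hU
  have hrange : range (fun x => (e.symm x : ℂ)) = U := by
    rw [← Function.comp_def, EquivLike.range_comp, Subtype.range_coe]
  exact hrange ▸ isPreconnected_range (by fun_prop)

lemma FreeDisc.map_notMem {f : ℂ ≃ₜ ℂ} {U : Set ℂ} (hU : FreeDisc f U) {z : ℂ} (hz : z ∈ U) :
    f z ∉ U :=
  disjoint_left.1 hU.2.2 (mem_image_of_mem f hz)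

lemma exists_freeDisc_mem_nhds {f : ℂ ≃ₜ ℂ} {z : ℂ} (hz : z ∉ FixPts f) :
    ∃ U ∈ 𝓝 z, FreeDisc f U := by
  obtain ⟨A, B, hA, hB, hfz, hzB, hAB⟩ := t2_separation (show f z ≠ z from hz)
  obtain ⟨r, hr, hball⟩ := Metric.mem_nhds_iff.1 <|
    inter_mem (hB.mem_nhds hzB) (f.continuous.continuousAt.preimage_mem_nhds (hA.mem_nhds hfz))
  refine ⟨ball z r, ball_mem_nhds z hr, isOpen_ball, ?_, ?_⟩
  · have e := (OpenPartialHomeomorph.univBall z r).toHomeomorphSourceTarget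
    rw [OpenPartialHomeomorph.univBall_source, OpenPartialHomeomorph.univBall_target _ hr] at e
    exact ⟨e.symm.trans (Homeomorph.Set.univ ℂ)⟩
  · exact hAB.mono (image_subset_iff.2 fun _ hx => (hball hx).2) fun _ hx => (hball hx).1

/-! ### Rotation numbers and returns of the lift -/

section Rotation

variable {f : ℂ ≃ₜ ℂ} {I : HIsotopy f} {z' : ℂ} {h : ℂ → ℂ} {U : Set ℂ} {l : ℂ → ℂ}

lemma IsEnlaceLift.exists_iterate_eq_add_zsmul (hh : IsEnlaceLift I z' h) (hl : IsLogBranch U z' l)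
    {z : ℂ} (hz : z ∈ U) {n : ℕ} (hn : f^[n] z ∈ U) :
    ∃ j : ℤ, h^[n] (l z) = l (f^[n] z) + j • (2 * Real.pi * Complex.I) := by
  simp only [zsmul_eq_mul]
  refine Complex.exp_eq_exp_iff_exists_int.1 (add_right_injective z' ?_)
  change z' + Complex.exp _ = z' + Complex.exp _
  rw [(hh.semiconj.iterate_right n).eq, hl.add_exp_apply hz, hl.add_exp_apply hn]

lemma IsEnlaceLift.exists_return_mem_nhds (hh : IsEnlaceLift I z' h) (hl : IsLogBranch U z' l)
    (hU : IsOpen U) {z : ℂ} (hz : z ∈ RecPlus f ∩ U) {ρ : ℝ} (hρ : HasRot I z' z ρ) {V : Set ℝ}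
    (hV : V ∈ 𝓝 ρ) :
    ∃ n > 0, ∃ j : ℤ, h^[n] (l z) ∈ deckTranslate (2 * Real.pi * Complex.I) (l '' U) j ∧
      (j / n : ℝ) ∈ V := by
  obtain ⟨⟨N, hN, hNz⟩, hzU⟩ := hz
  have hl_lim : Tendsto (fun i => (l z - l (f^[N i] z)).im / (2 * Real.pi)) atTop (𝓝 0) := by
    have := (hl.continuousOn.continuousAt (hU.mem_nhds hzU)).tendsto.comp hNz
    simpa using (Complex.continuous_im.tendsto _).comp (this.const_sub (l z)) |>.div_const _
  have hlim := (hρ N hN hNz).add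
    (hl_lim.div_atTop (tendsto_natCast_atTop_atTop.comp hN.tendsto_atTop))
  rw [add_zero] at hlim
  obtain ⟨i, hiV, hiU, hi⟩ := ((hlim.eventually_mem hV).and
    ((hNz.eventually_mem (hU.mem_nhds hzU)).and (hN.tendsto_atTop.eventually_gt_atTop 0))).exists
  obtain ⟨j, hj⟩ := hh.exists_iterate_eq_add_zsmul hl hzU hiU
  refine ⟨N i, hi, j, ⟨_, hiU, by simp [hj]⟩, ?_⟩
  have hsum := hh.sum_enlace_iterate (N i) (l z)
  rw [hl.add_exp_apply hzU, hj] at hsum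
  convert hiV using 2
  rw [Function.comp_apply, hsum, ← add_div, ← add_div, ← Complex.add_im]
  congr 1
  simp [Real.pi_ne_zero]

lemma iterate_add_comp_of_commute {c : ℂ} (hc : Function.Commute h (· + c)) (n : ℕ) (j : ℤ)
    (w : ℂ) : ((· + j • c) ∘ h)^[n] w = h^[n] w + (n * j) • c := by
  have hcj : Function.Commute (· + j • c) h := fun w => (map_add_zsmul_of_commute hc w j).symm
  rw [hcj.comp_iterate, Function.comp_apply, add_right_iterate, mul_zsmul, natCast_zsmul]

lemma IsEnlaceLift.exists_visits_add_comp (hh : IsEnlaceLift I z' h) (hl : IsLogBranch U z' l)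
    (hU : IsOpen U) {z : ℂ} (hz : z ∈ RecPlus f ∩ U) {ρ : ℝ} (hρ : HasRot I z' z ρ) (k : ℤ)
    {V : Set ℝ} (hV : V ∈ 𝓝 (ρ + k)) :
    ∃ n > (0 : ℕ), ∃ j : ℤ, (j / n : ℝ) ∈ V ∧
      Visits ((· + k • (2 * Real.pi * Complex.I)) ∘ h) (l '' U)
        (deckTranslate (2 * Real.pi * Complex.I) (l '' U) j) := by
  obtain ⟨n, hn, j, hj, hjV⟩ := hh.exists_return_mem_nhds hl hU hz hρ
    ((continuous_add_const (k : ℝ)).continuousAt.preimage_mem_nhds hV)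
  refine ⟨n, hn, j + n * k, ?_, n, hn, l z, mem_image_of_mem l hz.2, ?_⟩
  · have hshift : ((j + n * k : ℤ) / n : ℝ) = j / n + k := by
      push_cast
      field_simp
    rwa [hshift]
  · rw [iterate_add_comp_of_commute hh.commute]
    simpa [deckTranslate, add_mul] using hj

lemma IsEnlaceLift.enlace_eq_of_apply_eq_add_zsmul (hh : IsEnlaceLift I z' h) {w : ℂ} {k : ℤ}
    (hw : h w = w + k • (2 * Real.pi * Complex.I)) :
    z' + Complex.exp w ∈ FixPts f \ {z'} ∧ Enlace I (z' + Complex.exp w) z' = k := by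
  refine ⟨⟨?_, by simp [Complex.exp_ne_zero]⟩, ?_⟩
  · change f (z' + Complex.exp w) = _
    rw [← hh.semiconj.eq, hw]
    simp [Complex.exp_periodic.int_mul k w]
  · rw [hh.enlace_eq, hw]
    simp [Real.pi_ne_zero]

lemma IsEnlaceLift.add_comp_notMem_image (hh : IsEnlaceLift I z' h) (hl : IsLogBranch U z' l)
    (hU : FreeDisc f U) (k : ℤ) {w : ℂ} (hw : w ∈ l '' U) :
    ((· + k • (2 * Real.pi * Complex.I)) ∘ h) w ∉ l '' U := by
  obtain ⟨z, hz, rfl⟩ := hw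
  rintro ⟨x, hx, hxz : l x = h (l z) + k • _⟩
  refine hU.map_notMem hz ?_
  have hfz : z' + Complex.exp (h (l z)) = f z := by
    rw [hh.semiconj.eq, hl.add_exp_apply hz]
  rwa [← hfz, ← Complex.exp_periodic.zsmul k (h (l z)), ← hxz, hl.add_exp_apply hx]

theorem exists_fixPts_enlace_eq_of_lt_of_lt (hz' : z' ∈ FixPts f) (hU : FreeDisc f U) {z₀ z₁ : ℂ}
    (hz₀ : z₀ ∈ RecPlus f ∩ U) (hz₁ : z₁ ∈ RecPlus f ∩ U) {ρ₀ ρ₁ : ℝ} (hρ₀ : HasRot I z' z₀ ρ₀)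
    (hρ₁ : HasRot I z' z₁ ρ₁) {k : ℤ} (hk₀ : ρ₀ < k) (hk₁ : k < ρ₁) :
    ∃ z ∈ FixPts f \ {z'}, Enlace I z z' = k := by
  obtain ⟨h, hh⟩ := exists_isEnlaceLift I hz'
  have hz'U : z' ∉ U := fun hmem => hU.map_notMem hmem ((show f z' = z' from hz').symm ▸ hmem)
  obtain ⟨e⟩ := hU.2.1
  obtain ⟨l, hl⟩ := exists_isLogBranch e hz'U
  by_contra! hne
  set c : ℂ := 2 * Real.pi * Complex.I
  set g : ℂ → ℂ := (· + (-k) • c) ∘ h with hg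
  have hg_fix : ∀ w, g w ≠ w := fun w hw =>
    have hfix := hh.enlace_eq_of_apply_eq_add_zsmul (w := w) (k := k)
      (by simpa [hg, ← sub_eq_add_neg, sub_eq_iff_eq_add] using hw)
    hne _ hfix.1 hfix.2
  have hg_comm : Function.Commute g (· + c) :=
    Function.Commute.comp_left (fun w => add_right_comm w c _) hh.commute
  obtain ⟨n₁, hn₁, p, hp, hvisit₁⟩ := hh.exists_visits_add_comp hl hU.1 hz₁ hρ₁ (-k)
    (Ioi_mem_nhds (show 0 < ρ₁ + ((-k : ℤ) : ℝ) by push_cast; linarith))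
  obtain ⟨n₀, -, q, hq, hvisit₀⟩ := hh.exists_visits_add_comp hl hU.1 hz₀ hρ₀ (-k)
    (Iio_mem_nhds (show ρ₀ + ((-k : ℤ) : ℝ) < 0 by push_cast; linarith))
  refine not_visits_deckTranslate_of_pos_of_neg
    ((IsPositiveEmbedding.add_const _).comp hh.isPositiveEmbedding) hg_fix hg_comm
    (hl.isOpen_image hU.1) (hU.isPreconnected.image l hl.continuousOn)
    hl.pairwise_disjoint_deckTranslate (fun _ => hh.add_comp_notMem_image hl hU (-k))
    ?_ hvisit₁ ?_ hvisit₀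
  · exact Int.cast_pos.1 ((div_pos_iff_of_pos_right (Nat.cast_pos.2 hn₁)).1 (mem_Ioi.1 hp))
  · exact Int.cast_lt_zero.1 (neg_of_div_neg_left (mem_Iio.1 hq) n₀.cast_nonneg)

theorem exists_forall_hasRot_abs_le_of_freeDisc
    (hbdd : ∃ M : ℝ, ∀ z ∈ FixPts f \ {z'}, |Enlace I z z'| ≤ M) (hz' : z' ∈ FixPts f)
    (hU : FreeDisc f U) :
    ∃ M : ℝ, ∀ z ∈ RecPlus f ∩ U, ∀ ρ : ℝ, HasRot I z' z ρ → |ρ| ≤ M := by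
  obtain ⟨M, hM⟩ := hbdd
  by_cases hex : ∃ z₀ ∈ RecPlus f ∩ U, ∃ ρ₀ : ℝ, HasRot I z' z₀ ρ₀
  · obtain ⟨z₀, hz₀, ρ₀, hρ₀⟩ := hex
    obtain ⟨m, hm⟩ := exists_nat_gt (max M |ρ₀|)
    obtain ⟨hMm, hρ₀m⟩ := max_lt_iff.1 hm
    obtain ⟨hρ₀_neg, hρ₀_pos⟩ := abs_lt.1 hρ₀m
    refine ⟨m, fun z hz ρ hρ => abs_le.2 ⟨?_, ?_⟩⟩ <;> by_contra! hlt
    · obtain ⟨x, hx, hxm⟩ := exists_fixPts_enlace_eq_of_lt_of_lt hz' hU hz hz₀ hρ hρ₀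
        (k := -m) (by simpa using hlt) (by simpa using hρ₀_neg)
      exact absurd (hM x hx) (by simpa [hxm] using hMm)
    · obtain ⟨x, hx, hxm⟩ := exists_fixPts_enlace_eq_of_lt_of_lt hz' hU hz₀ hz hρ₀ hρ
        (k := m) (by simpa using hρ₀_pos) (by simpa using hlt)
      exact absurd (hM x hx) (by simpa [hxm] using hMm)
  · exact ⟨0, fun z hz ρ hρ => absurd ⟨z, hz, ρ, hρ⟩ hex⟩

lemma HasRot.eq_enlace_of_mem_fixPts {z : ℂ} {ρ : ℝ} (hρ : HasRot I z' z ρ) (hz : z ∈ FixPts f) :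
    ρ = Enlace I z z' := by
  have hiter (n : ℕ) : f^[n] z = z := Function.iterate_fixed hz n
  have hlim := hρ (· + 1) (strictMono_id.add_const 1) (by simp [hiter])
  have havg (n : ℕ) : (∑ r ∈ Finset.range (n + 1), Enlace I (f^[r] z) z') / ((n + 1 : ℕ) : ℝ)
      = Enlace I z z' := by
    simp only [hiter, Finset.sum_const, Finset.card_range, nsmul_eq_mul]
    field_simp
  simp only [havg] at hlim
  exact tendsto_nhds_unique tendsto_const_nhds hlim |>.symm

end Rotation

theorem stmt18_rotation_number_boundedness_general
    (f : ℂ ≃ₜ ℂ) (I : HIsotopy f) (z' : ℂ) (hz' : z' ∈ FixPts ⇑f)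
    (hbdd : ∃ M : ℝ, ∀ z ∈ FixPts ⇑f \ {z'}, |Enlace I z z'| ≤ M) :
    (∃ M : ℝ, ∀ z ∈ FixPts ⇑f \ {z'}, ∀ ρ : ℝ, HasRot I z' z ρ → |ρ| ≤ M) ∧
      (∀ U : Set ℂ, FreeDisc f U → ∃ M : ℝ, ∀ z ∈ RecPlus f ∩ U,
        ∀ ρ : ℝ, HasRot I z' z ρ → |ρ| ≤ M) ∧
      (∀ z₀ ∈ RecPlus f \ FixPts ⇑f, ∃ V ∈ 𝓝 z₀, ∃ M : ℝ,
        ∀ z ∈ V ∩ RecPlus f, ∀ ρ : ℝ, HasRot I z' z ρ → |ρ| ≤ M) := by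
  refine ⟨?_, fun U hU => exists_forall_hasRot_abs_le_of_freeDisc hbdd hz' hU, fun z₀ hz₀ => ?_⟩
  · obtain ⟨M, hM⟩ := hbdd
    exact ⟨M, fun z hz ρ hρ => hρ.eq_enlace_of_mem_fixPts hz.1 ▸ hM z hz⟩
  · obtain ⟨U, hU_nhds, hU⟩ := exists_freeDisc_mem_nhds hz₀.2
    obtain ⟨M, hM⟩ := exists_forall_hasRot_abs_le_of_freeDisc hbdd hz' hU
    exact ⟨U, hU_nhds, M, fun z hz => hM z hz.symm⟩

theorem stmt18_rotation_number_boundedness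
    (f : ℂ ≃ₜ ℂ) (I : HIsotopy f) (hP1 : P1 I) (hP2 : P2 I)
    (hnc : ¬ IsCompact (FixPts ⇑f)) (hA : Adapted I)
    (z' : ℂ) (hz' : z' ∈ FixPts ⇑f) :
    (∃ M : ℝ, ∀ z ∈ FixPts ⇑f \ {z'}, ∀ ρ : ℝ, HasRot I z' z ρ → |ρ| ≤ M) ∧
      (∀ U : Set ℂ, FreeDisc f U → ∃ M : ℝ, ∀ z ∈ RecPlus f ∩ U,
        ∀ ρ : ℝ, HasRot I z' z ρ → |ρ| ≤ M) ∧
      (∀ z₀ ∈ RecPlus f \ FixPts ⇑f, ∃ V ∈ 𝓝 z₀, ∃ M : ℝ,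
        ∀ z ∈ V ∩ RecPlus f, ∀ ρ : ℝ, HasRot I z' z ρ → |ρ| ≤ M) := by
  obtain ⟨M, hM⟩ := hP1
  exact stmt18_rotation_number_boundedness_general f I z' hz'
    ⟨M, fun z hz => hM z hz.1 z' hz' hz.2⟩

end
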